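/- A priori error estimate: Fix constants A₀ > 0, Bi > 0, H > 0, m₀ > 0, h₀ > 0, L ≥ h₀, M₁ > 0, M₂ ≥ 0, b* > 0, and let b : [0,T̂] → ℝ satisfy 0 < b(τ) ≤ b* and σ : ℝ → ℝ be Lipschitz with constant 𝓛 and bounded. Let (u, h) be a classical solution on [0,T̂] × [0,1] of the transformed system: ∂_τ u − y (h′/h) ∂_y u − (1/h²) ∂_{yy} u = 0, −(1/h) ∂_y u(τ,0) = Bi ( b(τ)/m₀ − H u(τ,0) ), −(1/h) ∂_y u(τ,1) = h′(τ) u(τ,1), h′(τ) = A₀ ( u(τ,1) − σ(h(τ))/m₀ ), with u twice continuously differentiable in y, once in τ, u(0,·) = u₀ ∈ H²(0,1), h(0) = h₀, and with the bounds h₀ ≤ h ≤ L, |h′| ≤ M₂, 0 < u < M₁ and ∫₀^{T̂} ‖u(τ,·)‖²_{H²(0,1)} dτ < ∞. Let (u_k, h_k) be a solution of the semi-discrete Galerkin problem on the same time interval: u_k(τ,·) lies in the piecewise linear finite element space V_k on a partition of [0,1] with maximal mesh size k, the Galerkin relations ∫₀¹ ∂_τ u_k φ − (h_k′/h_k) ∫₀¹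 y ∂_y u_k φ + (1/h_k²) ∫₀¹ ∂_y u_k ∂_y φ − (Bi/h_k)( b(τ)/m₀ − H u_k(τ,0) ) φ(0) + (h_k′/h_k) u_k(τ,1) φ(1) = 0 hold for all φ ∈ V_k, h_k′(τ) = A₀ ( u_k(τ,1) − σ(h_k(τ))/m₀ ), u_k(0,·) is the Lagrange interpolant of u₀, h_k(0) = h₀, and (u_k, h_k) obeys the same uniform bounds h₀ ≤ h_k ≤ L, |h_k′| ≤ M₂, 0 < u_k < M₁, together with max_{0 ≤ τ ≤ T̂} ‖u_k(τ,·)‖²_{H¹(0,1)} ≤ ĉ₁ with ĉ₁ independent of k. Then there exists a constant c > 0, independent of the partition and of k, such that max_{0 ≤ τ ≤ T̂} ∫₀¹ |u(τ,y) − u_k(τ,y)|² dy + ∫₀^{T̂} ∫₀¹ |∂_y (u − u_k)(τ,y)|² dy dτ + max_{0 ≤ τ ≤ T̂} |h(τ) − h_k(τ)|² + ∫₀^{T̂} |h′(τ) − h_k′(τ)|² dτ ≤ c k². -/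

import Mathlib

/-!
The proof is an energy argument for the discrete error `θ = Q u - u_k` together with the boundary
error `δ = h - h_k`, where `Q` is a projection-like operator onto the finite element space.

The difficulty is the consistency term `∫ ∂_τ(u - Q u) θ`: the time derivative `∂_τ u` is only
continuous, so nodal interpolation would give no rate. The quasi-interpolant
`Q f = I f + S (f - I f)` is used instead, where `I` is nodal interpolation and `S` averages over
a uniform partition of scale `1 / M ≈ k`. Since `S` is built symmetrically, `f - S f` tested with a
finite element function `φ` only sees oscillations of `φ` at scale `k`, and
`|∫ (g - S g) φ| ≤ C k sup|g| ∫ |φ'|` for merely bounded `g` (`smooth_dual`). On the other hand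
`f - Q f` and its derivative are still `O(k)` for twice differentiable `f` (`quasi_bounds`), on
arbitrary meshes, and `Q` commutes with `∂_τ` (`quasi_time`).

Subtracting the Galerkin relation from the weak form of the exact system (`weak_form`), both tested
with `θ`, gives with Young's inequality, the Lipschitz continuity of the kinetic law and the trace
inequality `θ(0)², θ(1)² ≤ ε ∫ θ'² + (1 + 1/ε) ∫ θ²` the energy inequality (`energy_step`)
`½ d/dτ (‖θ‖² + δ²) ≤ -κ ‖θ'‖² + C (‖θ‖² + δ² + k²)`.
Grönwall's lemma (`gronwall_dissip`) bounds `‖θ‖²`, `δ²` and `∫ ‖θ'‖²` by a multiple of `k²`, the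
initial error being `O(k)`, and `final_bounds` adds the approximation errors `u - Q u`.
The mesh width never exceeds `1`, so `k ≤ 1` may be assumed throughout.
-/

section

open Set MeasureTheory

/-! ### Piecewise linear functions on a mesh -/

/-- `y 0 = 0 < y 1 < ⋯ < y n = 1` is a partition of `[0,1]` into `n` cells of width at most `k`. -/
structure Mesh (n : ℕ) (y : ℕ → ℝ) (k : ℝ) : Prop where
  zero : y 0 = 0
  one : y n = 1
  lt : ∀ i, i < n → y i < y (i + 1)
  le : ∀ i, i < n → y (i + 1) - y i ≤ k

/-- The ramp which is `0` left of cell `m`, `1` right of it and linear on it. -/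
noncomputable def ramp (y : ℕ → ℝ) (m : ℕ) (x : ℝ) : ℝ :=
  max 0 (min 1 ((x - y m) / (y (m + 1) - y m)))

/-- The continuous piecewise linear function with nodal values `c 0, …, c n`, extended to `ℝ` by
constants. Writing it in terms of ramps makes it a telescoping sum. -/
noncomputable def pl (n : ℕ) (y c : ℕ → ℝ) (x : ℝ) : ℝ :=
  c 0 + ∑ m ∈ Finset.range n, (c (m + 1) - c m) * ramp y m x

/-- The derivative of `ramp y m` away from the nodes. -/
noncomputable def rampD (y : ℕ → ℝ) (m : ℕ) (x : ℝ) : ℝ :=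
  (Ioo (y m) (y (m + 1))).indicator (fun _ => (y (m + 1) - y m)⁻¹) x

/-- The piecewise constant derivative of `pl n y c`, set to `0` at the nodes. -/
noncomputable def plD (n : ℕ) (y c : ℕ → ℝ) (x : ℝ) : ℝ :=
  ∑ m ∈ Finset.range n, (c (m + 1) - c m) * rampD y m x

namespace Mesh

variable {n : ℕ} {y : ℕ → ℝ} {k : ℝ}

lemma mono (hM : Mesh n y k) {i j : ℕ} (hij : i ≤ j) (hj : j ≤ n) : y i ≤ y j := by
  induction j, hij using Nat.le_induction with
  | base => exact le_rfl
  | succ j _ ih => exact (ih (by omega)).trans (hM.lt j (by omega)).le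

lemma mem (hM : Mesh n y k) {i : ℕ} (hi : i ≤ n) : y i ∈ Icc (0:ℝ) 1 :=
  ⟨hM.zero ▸ hM.mono (Nat.zero_le i) hi, hM.one ▸ hM.mono hi le_rfl⟩

lemma cell_subset (hM : Mesh n y k) {m : ℕ} (hm : m < n) {x : ℝ}
    (hx : x ∈ Icc (y m) (y (m + 1))) : x ∈ Icc (0:ℝ) 1 :=
  ⟨(hM.mem hm.le).1.trans hx.1, hx.2.trans (hM.mem hm).2⟩

lemma pos (hM : Mesh n y k) : 0 < n := by
  rcases Nat.eq_zero_or_pos n with h | h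
  · have h1 := hM.one
    rw [h, hM.zero] at h1
    norm_num at h1
  · exact h

lemma k_pos (hM : Mesh n y k) : 0 < k := by
  have h1 := hM.lt 0 hM.pos
  have h2 := hM.le 0 hM.pos
  linarith

lemma exists_cell (hM : Mesh n y k) {x : ℝ} (hx : x ∈ Icc (0:ℝ) 1) :
    ∃ m, m < n ∧ x ∈ Icc (y m) (y (m + 1)) := by
  have key : ∀ j, j ≤ n → x ≤ y j → 0 < j → ∃ m, m < n ∧ x ∈ Icc (y m) (y (m + 1)) := by
    intro j
    induction j with
    | zero => intro _ _ h; omega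
    | succ j ih =>
      intro hj hxj _
      by_cases h : x ≤ y j
      · rcases Nat.eq_zero_or_pos j with h0 | h0
        · subst h0
          exact ⟨0, hM.pos, by rw [hM.zero]; exact hx.1, hxj⟩
        · exact ih (by omega) h h0
      · exact ⟨j, by omega, (not_le.mp h).le, hxj⟩
  exact key n le_rfl (hM.one ▸ hx.2) hM.pos

lemma exists_open_cell (hM : Mesh n y k) {x : ℝ} (hx : x ∈ Icc (0:ℝ) 1) (hxy : x ∉ range y) :
    ∃ m, m < n ∧ x ∈ Ioo (y m) (y (m + 1)) := by
  obtain ⟨m, hm, h1, h2⟩ := hM.exists_cell hx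
  exact ⟨m, hm, lt_of_le_of_ne h1 fun h => hxy ⟨m, h⟩,
    lt_of_le_of_ne h2 fun h => hxy ⟨m + 1, h.symm⟩⟩

end Mesh

variable {n : ℕ} {y : ℕ → ℝ} {k : ℝ}

lemma ramp_continuous (y : ℕ → ℝ) (m : ℕ) : Continuous (ramp y m) := by
  unfold ramp; fun_prop

lemma pl_continuous (n : ℕ) (y c : ℕ → ℝ) : Continuous (pl n y c) := by
  unfold pl
  have := ramp_continuous y
  fun_prop

lemma pl_cell (hM : Mesh n y k) (c : ℕ → ℝ) {m : ℕ} (hm : m < n) {x : ℝ}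
    (hx : x ∈ Icc (y m) (y (m + 1))) :
    pl n y c x = c m + (c (m + 1) - c m) * ((x - y m) / (y (m + 1) - y m)) := by
  have hpos : ∀ i < n, 0 < y (i + 1) - y i := fun i hi => sub_pos.2 (hM.lt i hi)
  have hlow : ∀ l, l < m → ramp y l x = 1 := by
    intro l hl
    have h1 : y (l + 1) ≤ x := (hM.mono (by omega) (by omega)).trans hx.1
    have : 1 ≤ (x - y l) / (y (l + 1) - y l) := by
      rw [le_div_iff₀ (hpos l (by omega))]; linarith
    unfold ramp; rw [min_eq_left this]; norm_num
  have hhigh : ∀ l, m < l → l < n → ramp y l x = 0 := by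
    intro l hl hln
    have h1 : x ≤ y l := hx.2.trans (hM.mono (by omega) (by omega))
    have : (x - y l) / (y (l + 1) - y l) ≤ 0 :=
      div_nonpos_of_nonpos_of_nonneg (by linarith) (hpos l hln).le
    unfold ramp; rw [min_eq_right (this.trans zero_le_one), max_eq_left this]
  have hmid : ramp y m x = (x - y m) / (y (m + 1) - y m) := by
    have h1 : (x - y m) / (y (m + 1) - y m) ≤ 1 := by
      rw [div_le_one (hpos m hm)]; linarith [hx.2]
    have h0 : 0 ≤ (x - y m) / (y (m + 1) - y m) :=
      div_nonneg (by linarith [hx.1]) (hpos m hm).le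
    unfold ramp; rw [min_eq_right h1, max_eq_right h0]
  have hsplit : ∀ j, m + 1 + j ≤ n →
      ∑ l ∈ Finset.range (m + 1 + j), (c (l + 1) - c l) * ramp y l x
        = c m - c 0 + (c (m + 1) - c m) * ((x - y m) / (y (m + 1) - y m)) := by
    intro j
    induction j with
    | zero =>
      intro _
      rw [Nat.add_zero, Finset.sum_range_succ, hmid, ← Finset.sum_range_sub c m]
      congr 1
      refine Finset.sum_congr rfl fun l hl => ?_
      rw [hlow l (Finset.mem_range.1 hl), mul_one]
    | succ j ih =>
      intro hj
      rw [← Nat.add_assoc, Finset.sum_range_succ, ih (by omega), hhigh _ (by omega) (by omega)]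
      ring
  obtain ⟨j, rfl⟩ := Nat.exists_eq_add_of_le (Nat.succ_le_of_lt hm)
  unfold pl
  rw [hsplit j le_rfl]
  ring

lemma plD_cell (hM : Mesh n y k) (c : ℕ → ℝ) {m : ℕ} (hm : m < n) {x : ℝ}
    (hx : x ∈ Ioo (y m) (y (m + 1))) :
    plD n y c x = (c (m + 1) - c m) / (y (m + 1) - y m) := by
  unfold plD
  rw [Finset.sum_eq_single m]
  · unfold rampD
    rw [indicator_of_mem hx, div_eq_mul_inv]
  · intro l hl hlm
    have hln := Finset.mem_range.1 hl
    unfold rampD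
    rw [indicator_of_notMem, mul_zero]
    rintro ⟨h1, h2⟩
    rcases lt_or_gt_of_ne hlm with h | h
    · exact absurd (h2.trans_le (hM.mono (Nat.succ_le_of_lt h) hm.le)) (not_lt.2 hx.1.le)
    · exact absurd (h1.trans_le' (hM.mono (Nat.succ_le_of_lt h) hln.le)) (not_lt.2 hx.2.le)
  · intro h; exact absurd (Finset.mem_range.2 hm) h

lemma pl_node (hM : Mesh n y k) (c : ℕ → ℝ) {i : ℕ} (hi : i ≤ n) : pl n y c (y i) = c i := by
  rcases Nat.lt_or_ge i n with h | h
  · rw [pl_cell hM c h ⟨le_rfl, (hM.lt i h).le⟩]; simp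
  · obtain rfl : i = n := le_antisymm hi h
    obtain ⟨m, rfl⟩ : ∃ m, i = m + 1 := ⟨i - 1, by have := hM.pos; omega⟩
    have hlt := hM.lt m (by omega)
    rw [pl_cell hM c (Nat.lt_succ_self m) ⟨hlt.le, le_rfl⟩, div_self (by linarith)]
    ring

/-- A function which is affine on every cell coincides on `[0,1]` with the piecewise linear
function through its nodal values. -/
lemma eq_pl_of_affine (hM : Mesh n y k) {f : ℝ → ℝ}
    (hf : ∀ m, m < n → ∃ α β : ℝ, ∀ x ∈ Icc (y m) (y (m + 1)), f x = α * x + β)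
    {x : ℝ} (hx : x ∈ Icc (0:ℝ) 1) : f x = pl n y (fun i => f (y i)) x := by
  obtain ⟨m, hm, hxm⟩ := hM.exists_cell hx
  obtain ⟨α, β, hab⟩ := hf m hm
  have hlt := hM.lt m hm
  have hne : y (m + 1) - y m ≠ 0 := by linarith
  rw [pl_cell hM _ hm hxm, hab x hxm, hab _ ⟨le_rfl, hlt.le⟩, hab _ ⟨hlt.le, le_rfl⟩]
  field_simp
  ring

lemma pl_affine (hM : Mesh n y k) (c : ℕ → ℝ) (m : ℕ) (hm : m < n) :
    ∃ α β : ℝ, ∀ x ∈ Icc (y m) (y (m + 1)), pl n y c x = α * x + β :=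
  ⟨(c (m + 1) - c m) / (y (m + 1) - y m),
    c m - (c (m + 1) - c m) / (y (m + 1) - y m) * y m, fun x hx => by
      rw [pl_cell hM c hm hx]; ring⟩

lemma hasDerivAt_of_eq_pl (hM : Mesh n y k) {f : ℝ → ℝ} (c : ℕ → ℝ)
    (hf : ∀ x ∈ Icc (0:ℝ) 1, f x = pl n y c x) {x : ℝ} (hx : x ∈ Icc (0:ℝ) 1)
    (hxy : x ∉ range y) : HasDerivAt f (plD n y c x) x := by
  obtain ⟨m, hm, hxm⟩ := hM.exists_open_cell hx hxy
  rw [plD_cell hM c hm hxm]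
  have h1 : HasDerivAt (fun z => c m + (c (m + 1) - c m) * ((z - y m) / (y (m + 1) - y m)))
      ((c (m + 1) - c m) / (y (m + 1) - y m)) x := by
    have := ((((hasDerivAt_id x).sub_const (y m)).div_const (y (m + 1) - y m)).const_mul
      (c (m + 1) - c m)).const_add (c m)
    exact this.congr_deriv (by ring)
  refine h1.congr_of_eventuallyEq ?_
  filter_upwards [Ioo_mem_nhds hxm.1 hxm.2] with z hz
  have hz' := Ioo_subset_Icc_self hz
  rw [hf z (hM.cell_subset hm hz'), pl_cell hM c hm hz']

lemma pl_sub (n : ℕ) (y c d : ℕ → ℝ) (x : ℝ) :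
    pl n y (fun i => c i - d i) x = pl n y c x - pl n y d x := by
  unfold pl
  rw [add_sub_add_comm, ← Finset.sum_sub_distrib]
  congr 1
  exact Finset.sum_congr rfl fun _ _ => by ring

lemma pl_add (n : ℕ) (y c d : ℕ → ℝ) (x : ℝ) :
    pl n y (fun i => c i + d i) x = pl n y c x + pl n y d x := by
  unfold pl
  rw [add_add_add_comm, ← Finset.sum_add_distrib]
  congr 1
  exact Finset.sum_congr rfl fun _ _ => by ring

lemma plD_sub (n : ℕ) (y c d : ℕ → ℝ) (x : ℝ) :
    plD n y (fun i => c i - d i) x = plD n y c x - plD n y d x := by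
  unfold plD
  rw [← Finset.sum_sub_distrib]
  exact Finset.sum_congr rfl fun _ _ => by ring

lemma plD_add (n : ℕ) (y c d : ℕ → ℝ) (x : ℝ) :
    plD n y (fun i => c i + d i) x = plD n y c x + plD n y d x := by
  unfold plD
  rw [← Finset.sum_add_distrib]
  exact Finset.sum_congr rfl fun _ _ => by ring

lemma pl_sum (n : ℕ) (y : ℕ → ℝ) (J : ℕ) (s : ℕ → ℝ) (a : ℕ → ℕ → ℝ) (x : ℝ) :
    pl n y (fun i => ∑ j ∈ Finset.range J, s j * a j i) x
      = ∑ j ∈ Finset.range J, s j * pl n y (a j) x := by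
  induction J with
  | zero => simp [pl]
  | succ J ih =>
    simp only [Finset.sum_range_succ]
    rw [pl_add n y (fun i => ∑ j ∈ Finset.range J, s j * a j i) (fun i => s J * a J i), ih]
    congr 1
    unfold pl
    rw [mul_add, Finset.mul_sum]
    congr 1
    exact Finset.sum_congr rfl fun _ _ => by ring

/-- On each cell the values of `pl n y c` are convex combinations of two nodal values. -/
lemma pl_convex (hM : Mesh n y k) {x : ℝ} {m : ℕ} (hm : m < n)
    (hx : x ∈ Icc (y m) (y (m + 1))) :
    ∃ t ∈ Icc (0:ℝ) 1, ∀ c : ℕ → ℝ, pl n y c x = (1 - t) * c m + t * c (m + 1) := by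
  have hp := sub_pos.2 (hM.lt m hm)
  refine ⟨(x - y m) / (y (m + 1) - y m), ⟨div_nonneg (by linarith [hx.1]) hp.le, ?_⟩, ?_⟩
  · rw [div_le_one hp]; linarith [hx.2]
  · intro c; rw [pl_cell hM c hm hx]; ring

lemma pl_abs_le (hM : Mesh n y k) {c : ℕ → ℝ} {W : ℝ} (hc : ∀ i, i ≤ n → |c i| ≤ W)
    {x : ℝ} (hx : x ∈ Icc (0:ℝ) 1) : |pl n y c x| ≤ W := by
  obtain ⟨m, hm, hxm⟩ := hM.exists_cell hx
  obtain ⟨t, ht, h⟩ := pl_convex hM hm hxm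
  rw [h c]
  have h1 := abs_le.1 (hc m hm.le)
  have h2 := abs_le.1 (hc (m + 1) hm)
  rw [abs_le]
  constructor <;> nlinarith [ht.1, ht.2]

/-! ### Bounded measurable functions on the unit interval -/

/-- Bounded measurable functions on `(0,1]`: a class of integrable functions closed under products
that contains the continuous functions and the derivatives of piecewise linear functions. -/
def BM (f : ℝ → ℝ) : Prop :=
  AEStronglyMeasurable f (volume.restrict (Ioc (0:ℝ) 1)) ∧ ∃ B, ∀ x ∈ Ioc (0:ℝ) 1, |f x| ≤ B

namespace BM
variable {f g : ℝ → ℝ}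

lemma add (hf : BM f) (hg : BM g) : BM (fun x => f x + g x) := by
  obtain ⟨h1, B, hB⟩ := hf
  obtain ⟨h2, C, hC⟩ := hg
  exact ⟨h1.add h2, B + C, fun x hx => (abs_add_le _ _).trans (add_le_add (hB x hx) (hC x hx))⟩

lemma neg (hf : BM f) : BM (fun x => - f x) := by
  obtain ⟨h1, B, hB⟩ := hf
  exact ⟨h1.neg, B, fun x hx => by rw [abs_neg]; exact hB x hx⟩

lemma sub (hf : BM f) (hg : BM g) : BM (fun x => f x - g x) := by
  simpa only [sub_eq_add_neg] using hf.add hg.neg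

lemma mul (hf : BM f) (hg : BM g) : BM (fun x => f x * g x) := by
  obtain ⟨h1, B, hB⟩ := hf
  obtain ⟨h2, C, hC⟩ := hg
  refine ⟨h1.mul h2, B * C, fun x hx => ?_⟩
  rw [abs_mul]
  exact mul_le_mul (hB x hx) (hC x hx) (abs_nonneg _) ((abs_nonneg _).trans (hB x hx))

lemma abs (hf : BM f) : BM (fun x => |f x|) := by
  obtain ⟨h1, B, hB⟩ := hf
  exact ⟨h1.norm, B, fun x hx => by rw [abs_abs]; exact hB x hx⟩

lemma sq (hf : BM f) : BM (fun x => f x ^ 2) := by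
  simpa only [pow_two] using hf.mul hf

lemma const (a : ℝ) : BM (fun _ => a) :=
  ⟨aestronglyMeasurable_const, |a|, fun _ _ => le_rfl⟩

lemma const_mul (a : ℝ) (hf : BM f) : BM (fun x => a * f x) := (const a).mul hf

lemma of_continuousOn (hf : ContinuousOn f (Icc 0 1)) : BM f := by
  refine ⟨(hf.mono Ioc_subset_Icc_self).aestronglyMeasurable measurableSet_Ioc, ?_⟩
  obtain ⟨B, hB⟩ := isCompact_Icc.exists_bound_of_continuousOn hf
  exact ⟨B, fun x hx => hB x (Ioc_subset_Icc_self hx)⟩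

lemma of_continuous (hf : Continuous f) : BM f := of_continuousOn hf.continuousOn

lemma ii (hf : BM f) : IntervalIntegrable f volume 0 1 := by
  obtain ⟨h1, B, hB⟩ := hf
  rw [intervalIntegrable_iff_integrableOn_Ioc_of_le zero_le_one]
  refine Integrable.of_bound h1 B ?_
  exact (ae_restrict_iff' measurableSet_Ioc).2 (Filter.Eventually.of_forall hB)

end BM

lemma rampD_bm (y : ℕ → ℝ) (m : ℕ) : BM (rampD y m) := by
  refine ⟨(measurable_const.indicator measurableSet_Ioo).aestronglyMeasurable,
    |(y (m + 1) - y m)⁻¹|, fun x _ => ?_⟩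
  unfold rampD indicator
  split_ifs
  · exact le_rfl
  · simp

lemma plD_bm (n : ℕ) (y c : ℕ → ℝ) : BM (plD n y c) := by
  induction n with
  | zero =>
    have : plD 0 y c = fun _ => 0 := by funext x; simp [plD]
    rw [this]; exact BM.const 0
  | succ n ih =>
    have : plD (n + 1) y c = fun x => plD n y c x + (c (n + 1) - c n) * rampD y n x := by
      funext x; simp [plD, Finset.sum_range_succ]
    rw [this]; exact ih.add ((rampD_bm y n).const_mul _)

lemma pl_bm (n : ℕ) (y c : ℕ → ℝ) : BM (pl n y c) := BM.of_continuous (pl_continuous n y c)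

lemma ae_off_nodes (y : ℕ → ℝ) : ∀ᵐ x : ℝ, x ∉ range y :=
  (countable_range y).ae_notMem volume

/-- Monotonicity of `∫₀¹` for functions compared away from the nodes; the smaller function need
not be integrable if it is nonnegative, hence the separate lemma `integral_le_off'`. -/
lemma integral_le_off {f g : ℝ → ℝ} (hf : BM f) (hg : BM g)
    (h : ∀ x ∈ Icc (0:ℝ) 1, x ∉ range y → f x ≤ g x) :
    ∫ x in (0:ℝ)..1, f x ≤ ∫ x in (0:ℝ)..1, g x := by
  refine intervalIntegral.integral_mono_ae_restrict zero_le_one hf.ii hg.ii ?_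
  refine (ae_restrict_iff' measurableSet_Icc).2 ?_
  filter_upwards [ae_off_nodes y] with x hx hx1 using h x hx1 hx

lemma integral_le_off' {f g : ℝ → ℝ} (hg : BM g)
    (h0 : ∀ x, 0 ≤ f x) (h : ∀ x ∈ Icc (0:ℝ) 1, x ∉ range y → f x ≤ g x) :
    ∫ x in (0:ℝ)..1, f x ≤ ∫ x in (0:ℝ)..1, g x := by
  rw [intervalIntegral.integral_of_le zero_le_one, intervalIntegral.integral_of_le zero_le_one]
  refine integral_mono_of_nonneg (Filter.Eventually.of_forall h0)
    ((intervalIntegrable_iff_integrableOn_Ioc_of_le zero_le_one).1 hg.ii) ?_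
  refine (ae_restrict_iff' measurableSet_Ioc).2 ?_
  filter_upwards [ae_off_nodes y] with x hx hx1 using h x (Ioc_subset_Icc_self hx1) hx

lemma integral_congr_off {f g : ℝ → ℝ}
    (h : ∀ x ∈ Icc (0:ℝ) 1, x ∉ range y → f x = g x) :
    ∫ x in (0:ℝ)..1, f x = ∫ x in (0:ℝ)..1, g x := by
  refine intervalIntegral.integral_congr_ae ?_
  filter_upwards [ae_off_nodes y] with x hx hx1
  rw [uIoc_of_le zero_le_one] at hx1
  exact h x (Ioc_subset_Icc_self hx1) hx

/-- The fundamental theorem of calculus for functions differentiable away from the nodes. -/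
lemma ftc_off {f f' : ℝ → ℝ} (hf : ContinuousOn f (Icc 0 1)) (hf' : BM f')
    (hd : ∀ x ∈ Ioo (0:ℝ) 1, x ∉ range y → HasDerivAt f (f' x) x)
    {a b : ℝ} (ha : 0 ≤ a) (hab : a ≤ b) (hb : b ≤ 1) :
    ∫ x in a..b, f' x = f b - f a := by
  refine MeasureTheory.integral_eq_of_hasDerivAt_off_countable_of_le f f' hab (countable_range y)
    (hf.mono (Icc_subset_Icc ha hb)) ?_ (hf'.ii.mono_set ?_)
  · intro x hx
    exact hd x ⟨ha.trans_lt hx.1.1, hx.1.2.trans_le hb⟩ hx.2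
  · rw [uIcc_of_le hab, uIcc_of_le zero_le_one]
    exact Icc_subset_Icc ha hb

lemma pl_hasDerivAt (hM : Mesh n y k) (c : ℕ → ℝ) {x : ℝ} (hx : x ∈ Icc (0:ℝ) 1)
    (hxy : x ∉ range y) : HasDerivAt (pl n y c) (plD n y c x) x :=
  hasDerivAt_of_eq_pl hM c (fun _ _ => rfl) hx hxy

/-! ### A symmetric averaging operator at a uniform scale -/

/-- The unit step from `0` to `1` on `[j - 1, j]`, as a difference of positive parts. -/
noncomputable def stepFn (j : ℕ) (t : ℝ) : ℝ := max (t + 1 - j) 0 - max (t - j) 0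

/-- The hat function of half-width one centred at `j`. -/
noncomputable def hatFn (j : ℕ) (t : ℝ) : ℝ := stepFn j t - stepFn (j + 1) t

lemma stepFn_mono (j : ℕ) {s t : ℝ} (h : s ≤ t) : stepFn j s ≤ stepFn j t := by
  unfold stepFn
  rcases max_cases (s + 1 - j) 0 with h1 | h1 <;> rcases max_cases (s - j) 0 with h2 | h2 <;>
  rcases max_cases (t + 1 - j) 0 with h3 | h3 <;> rcases max_cases (t - j) 0 with h4 | h4 <;>
  linarith [h1.1, h1.2, h2.1, h2.2, h3.1, h3.2, h4.1, h4.2]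

lemma stepFn_succ (j : ℕ) (t : ℝ) : stepFn (j + 1) t = stepFn j (t - 1) := by
  unfold stepFn; push_cast; ring_nf

lemma hatFn_nonneg (j : ℕ) (t : ℝ) : 0 ≤ hatFn j t := by
  unfold hatFn
  rw [stepFn_succ]
  linarith [stepFn_mono j (show t - 1 ≤ t by linarith)]

lemma hatFn_eq_zero (j : ℕ) (t : ℝ) (h : t ≤ j - 1 ∨ j + 1 ≤ t) : hatFn j t = 0 := by
  unfold hatFn stepFn
  push_cast
  rcases h with h | h
  · rw [max_eq_right, max_eq_right, max_eq_right, max_eq_right] <;> linarith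
  · rw [max_eq_left, max_eq_left, max_eq_left, max_eq_left] <;> linarith

lemma sum_hatFn (M : ℕ) {t : ℝ} (h0 : 0 ≤ t) (h1 : t ≤ M) :
    ∑ j ∈ Finset.range (M + 1), hatFn j t = 1 := by
  unfold hatFn
  rw [Finset.sum_range_sub' (fun j => stepFn j t)]
  unfold stepFn
  push_cast
  rw [max_eq_left, max_eq_left, max_eq_right, max_eq_right] <;> linarith

lemma sum_stepFn_diff (J : ℕ) {s t : ℝ} (h : s ≤ t) :
    ∑ j ∈ Finset.range J, |stepFn j t - stepFn j s| ≤ t - s := by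
  have h1 : ∀ r : ℝ, ∑ j ∈ Finset.range J, stepFn j r = max (r + 1) 0 - max (r + 1 - J) 0 := by
    intro r
    have := Finset.sum_range_sub' (fun j : ℕ => max (r + 1 - j) 0) J
    simp only [Nat.cast_zero, sub_zero] at this
    rw [← this]
    refine Finset.sum_congr rfl fun j _ => ?_
    unfold stepFn
    push_cast
    ring_nf
  have h2 : ∑ j ∈ Finset.range J, |stepFn j t - stepFn j s|
      = ∑ j ∈ Finset.range J, stepFn j t - ∑ j ∈ Finset.range J, stepFn j s := by
    rw [← Finset.sum_sub_distrib]
    exact Finset.sum_congr rfl fun j _ => abs_of_nonneg (by linarith [stepFn_mono j h])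
  rw [h2, h1, h1]
  have h3 : max (s + 1 - J) 0 ≤ max (t + 1 - J) 0 := max_le_max (by linarith) le_rfl
  have h4 : max (t + 1) 0 ≤ max (s + 1) 0 + (t - s) :=
    max_le (by linarith [le_max_left (s + 1) 0]) (by linarith [le_max_right (s + 1) 0])
  linarith

lemma sum_hatFn_diff (J : ℕ) {s t : ℝ} (h : s ≤ t) :
    ∑ j ∈ Finset.range J, |hatFn j t - hatFn j s| ≤ 2 * (t - s) := by
  calc ∑ j ∈ Finset.range J, |hatFn j t - hatFn j s|
      ≤ ∑ j ∈ Finset.range J, (|stepFn j t - stepFn j s|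
          + |stepFn j (t - 1) - stepFn j (s - 1)|) := by
        refine Finset.sum_le_sum fun j _ => ?_
        unfold hatFn
        rw [stepFn_succ, stepFn_succ, sub_sub_sub_comm]
        exact abs_sub _ _
    _ ≤ (t - s) + ((t - 1) - (s - 1)) := by
        rw [Finset.sum_add_distrib]
        exact add_le_add (sum_stepFn_diff J h) (sum_stepFn_diff J (by linarith))
    _ = _ := by ring

/-- Nodal interpolant on the given mesh of the `j`-th hat function of the uniform grid of
width `1 / M`. -/
noncomputable def chi (n : ℕ) (y : ℕ → ℝ) (M j : ℕ) : ℝ → ℝ :=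
  pl n y (fun i => hatFn j (M * y i))

/-- The mean value of `w` with respect to the weight `chi n y M j`. If the weight vanishes, its
mean is `0` by the convention for division by zero. -/
noncomputable def mean (n : ℕ) (y : ℕ → ℝ) (M : ℕ) (w : ℝ → ℝ) (j : ℕ) : ℝ :=
  (∫ x in (0:ℝ)..1, w x * chi n y M j x) / ∫ x in (0:ℝ)..1, chi n y M j x

/-- Nodal values of the averaging operator `w ↦ ∑ⱼ mean w j • chi j`, whose kernel
`∑ⱼ chi j (x) chi j (x') / ∫ chi j` is symmetric. -/
noncomputable def smooth (n : ℕ) (y : ℕ → ℝ) (M : ℕ) (w : ℝ → ℝ) (i : ℕ) : ℝ :=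
  ∑ j ∈ Finset.range (M + 1), mean n y M w j * hatFn j (M * y i)

lemma chi_bm (M j : ℕ) : BM (chi n y M j) := pl_bm _ _ _

lemma chi_nonneg (hM : Mesh n y k) (M j : ℕ) {x : ℝ} (hx : x ∈ Icc (0:ℝ) 1) :
    0 ≤ chi n y M j x := by
  obtain ⟨m, hm, hxm⟩ := hM.exists_cell hx
  obtain ⟨t, ht, h⟩ := pl_convex hM hm hxm
  unfold chi
  rw [h]
  have h1 := hatFn_nonneg j (M * y m)
  have h2 := hatFn_nonneg j (M * y (m + 1))
  nlinarith [ht.1, ht.2, mul_nonneg ht.1 h2, mul_nonneg (sub_nonneg.2 ht.2) h1]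

lemma sum_chi (hM : Mesh n y k) (M : ℕ) {x : ℝ} (hx : x ∈ Icc (0:ℝ) 1) :
    ∑ j ∈ Finset.range (M + 1), chi n y M j x = 1 := by
  obtain ⟨m, hm, hxm⟩ := hM.exists_cell hx
  obtain ⟨t, ht, h⟩ := pl_convex hM hm hxm
  have hs : ∀ i, i ≤ n → ∑ j ∈ Finset.range (M + 1), hatFn j (M * y i) = 1 := fun i hi =>
    sum_hatFn M (mul_nonneg (Nat.cast_nonneg _) (hM.mem hi).1)
      (mul_le_of_le_one_right (Nat.cast_nonneg _) (hM.mem hi).2)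
  unfold chi
  simp only [h]
  rw [Finset.sum_add_distrib, ← Finset.mul_sum, ← Finset.mul_sum, hs m hm.le, hs (m + 1) hm]
  ring

lemma chi_le_one (hM : Mesh n y k) {M j : ℕ} (hj : j ∈ Finset.range (M + 1)) {x : ℝ}
    (hx : x ∈ Icc (0:ℝ) 1) : chi n y M j x ≤ 1 := by
  rw [← sum_chi hM M hx]
  exact Finset.single_le_sum (f := fun j => chi n y M j x) (fun i _ => chi_nonneg hM M i hx) hj

lemma chi_eq_zero (hM : Mesh n y k) {M : ℕ} (hMk : M * k ≤ 1) (j : ℕ) {x : ℝ}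
    (hx : x ∈ Icc (0:ℝ) 1) (h : (M * x : ℝ) < j - 2 ∨ (j + 2 : ℝ) < M * x) :
    chi n y M j x = 0 := by
  obtain ⟨m, hm, hxm⟩ := hM.exists_cell hx
  obtain ⟨t, ht, hc⟩ := pl_convex hM hm hxm
  have hM0 : (0:ℝ) ≤ M := Nat.cast_nonneg _
  have hl := hM.le m hm
  have h1 : (M * x : ℝ) - M * y m ≤ 1 := by nlinarith [hxm.1, hxm.2]
  have h2 : (M * y (m + 1) : ℝ) - M * x ≤ 1 := by nlinarith [hxm.1, hxm.2]
  have h3 : (M * y m : ℝ) ≤ M * x := mul_le_mul_of_nonneg_left hxm.1 hM0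
  have h4 : (M * x : ℝ) ≤ M * y (m + 1) := mul_le_mul_of_nonneg_left hxm.2 hM0
  unfold chi
  rw [hc, hatFn_eq_zero, hatFn_eq_zero]
  · ring
  · rcases h with h | h
    · left; linarith
    · right; linarith
  · rcases h with h | h
    · left; linarith
    · right; linarith

lemma integral_chi_nonneg (hM : Mesh n y k) (M j : ℕ) : 0 ≤ ∫ x in (0:ℝ)..1, chi n y M j x :=
  intervalIntegral.integral_nonneg zero_le_one fun _ hx => chi_nonneg hM M j hx

lemma integral_chi_le (hM : Mesh n y k) {M : ℕ} (hM1 : 1 ≤ M) (hMk : M * k ≤ 1) {j : ℕ}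
    (hj : j ∈ Finset.range (M + 1)) : ∫ x in (0:ℝ)..1, chi n y M j x ≤ 4 / M := by
  have hM0 : (0:ℝ) < M := by exact_mod_cast hM1
  rw [intervalIntegral.integral_of_le zero_le_one]
  have h1 : ∫ x in Ioc (0:ℝ) 1, chi n y M j x
      ≤ ∫ x in Ioc (0:ℝ) 1, (Icc ((j - 2 : ℝ) / M) ((j + 2 : ℝ) / M)).indicator (fun _ => (1:ℝ)) x := by
    refine setIntegral_mono_on
      ((intervalIntegrable_iff_integrableOn_Ioc_of_le zero_le_one).1 (chi_bm M j).ii)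
      ((integrable_indicator_iff measurableSet_Icc).2 (by simp)).integrableOn
      measurableSet_Ioc fun x hx => ?_
    have hx' := Ioc_subset_Icc_self hx
    unfold indicator
    split_ifs with h
    · exact chi_le_one hM hj hx'
    · refine (chi_eq_zero hM hMk j hx' ?_).le
      rw [mem_Icc, not_and_or, not_le, not_le, lt_div_iff₀ hM0, div_lt_iff₀ hM0] at h
      rwa [mul_comm (M:ℝ) x]
  refine h1.trans ?_
  have h2 : ∫ x in Ioc (0:ℝ) 1, (Icc ((j - 2 : ℝ) / M) ((j + 2 : ℝ) / M)).indicator (fun _ => (1:ℝ)) x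
      ≤ ∫ x, (Icc ((j - 2 : ℝ) / M) ((j + 2 : ℝ) / M)).indicator (fun _ => (1:ℝ)) x :=
    setIntegral_le_integral ((integrable_indicator_iff measurableSet_Icc).2 (by simp))
      (Filter.Eventually.of_forall fun x => indicator_nonneg (fun _ _ => zero_le_one) x)
  refine h2.trans ?_
  rw [integral_indicator measurableSet_Icc]
  simp only [integral_const, MeasurableSet.univ, measureReal_restrict_apply, univ_inter,
    smul_eq_mul, mul_one]
  rw [Real.volume_real_Icc, max_le_iff]
  constructor
  · apply le_of_eq; ring
  · positivity

lemma integral_mul_chi_le (hM : Mesh n y k) (M j : ℕ) {w : ℝ → ℝ} (hw : BM w) {W : ℝ}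
    (hW : ∀ x ∈ Icc (0:ℝ) 1, chi n y M j x ≠ 0 → |w x| ≤ W) :
    |∫ x in (0:ℝ)..1, w x * chi n y M j x| ≤ W * ∫ x in (0:ℝ)..1, chi n y M j x := by
  refine (intervalIntegral.abs_integral_le_integral_abs zero_le_one).trans ?_
  rw [← intervalIntegral.integral_const_mul]
  refine intervalIntegral.integral_mono_on zero_le_one (hw.mul (chi_bm M j)).abs.ii
    ((chi_bm M j).const_mul W).ii fun x hx => ?_
  rw [abs_mul, abs_of_nonneg (chi_nonneg hM M j hx)]
  by_cases h : chi n y M j x = 0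
  · rw [h]; simp
  · exact mul_le_mul_of_nonneg_right (hW x hx h) (chi_nonneg hM M j hx)

lemma mean_le (hM : Mesh n y k) (M j : ℕ) {w : ℝ → ℝ} (hw : BM w) {W : ℝ} (hW0 : 0 ≤ W)
    (hW : ∀ x ∈ Icc (0:ℝ) 1, |w x| ≤ W) : |mean n y M w j| ≤ W := by
  unfold mean
  rw [abs_div, abs_of_nonneg (integral_chi_nonneg hM M j)]
  exact div_le_of_le_mul₀ (integral_chi_nonneg hM M j) hW0
    (integral_mul_chi_le hM M j hw fun x hx _ => hW x hx)

lemma smooth_le (hM : Mesh n y k) (M : ℕ) {w : ℝ → ℝ} (hw : BM w) {W : ℝ} (hW0 : 0 ≤ W)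
    (hW : ∀ x ∈ Icc (0:ℝ) 1, |w x| ≤ W) {i : ℕ} (hi : i ≤ n) : |smooth n y M w i| ≤ W := by
  unfold smooth
  calc |∑ j ∈ Finset.range (M + 1), mean n y M w j * hatFn j (M * y i)|
      ≤ ∑ j ∈ Finset.range (M + 1), W * hatFn j (M * y i) := by
        refine (Finset.abs_sum_le_sum_abs _ _).trans (Finset.sum_le_sum fun j _ => ?_)
        rw [abs_mul, abs_of_nonneg (hatFn_nonneg _ _)]
        exact mul_le_mul_of_nonneg_right (mean_le hM M j hw hW0 hW) (hatFn_nonneg _ _)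
    _ = W := by
        rw [← Finset.mul_sum, sum_hatFn M (mul_nonneg (Nat.cast_nonneg _) (hM.mem hi).1)
          (mul_le_of_le_one_right (Nat.cast_nonneg _) (hM.mem hi).2), mul_one]

/-- Inverse estimate: the averages live on the scale `1 / M`, however fine the mesh may be. -/
lemma plD_smooth_le (hM : Mesh n y k) (M : ℕ) {w : ℝ → ℝ} (hw : BM w) {W : ℝ} (hW0 : 0 ≤ W)
    (hW : ∀ x ∈ Icc (0:ℝ) 1, |w x| ≤ W) {x : ℝ} (hx : x ∈ Icc (0:ℝ) 1) (hxy : x ∉ range y) :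
    |plD n y (smooth n y M w) x| ≤ 2 * M * W := by
  obtain ⟨m, hm, hxm⟩ := hM.exists_open_cell hx hxy
  have hlt := hM.lt m hm
  rw [plD_cell hM _ hm hxm, abs_div, abs_of_pos (sub_pos.2 hlt), div_le_iff₀ (sub_pos.2 hlt)]
  unfold smooth
  rw [← Finset.sum_sub_distrib]
  calc |∑ j ∈ Finset.range (M + 1), (mean n y M w j * hatFn j (M * y (m + 1))
          - mean n y M w j * hatFn j (M * y m))|
      ≤ ∑ j ∈ Finset.range (M + 1), W * |hatFn j (M * y (m + 1)) - hatFn j (M * y m)| := by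
        refine (Finset.abs_sum_le_sum_abs _ _).trans (Finset.sum_le_sum fun j _ => ?_)
        rw [← mul_sub, abs_mul]
        exact mul_le_mul_of_nonneg_right (mean_le hM M j hw hW0 hW) (abs_nonneg _)
    _ ≤ W * (2 * (M * y (m + 1) - M * y m)) := by
        rw [← Finset.mul_sum]
        exact mul_le_mul_of_nonneg_left (sum_hatFn_diff _
          (mul_le_mul_of_nonneg_left hlt.le (Nat.cast_nonneg _))) hW0
    _ = _ := by ring

lemma pl_smooth (M : ℕ) (w : ℝ → ℝ) (x : ℝ) :
    pl n y (smooth n y M w) x = ∑ j ∈ Finset.range (M + 1), mean n y M w j * chi n y M j x :=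
  pl_sum n y (M + 1) (mean n y M w) (fun j i => hatFn j (M * y i)) x

lemma pl_osc (hM : Mesh n y k) (c : ℕ → ℝ) {a b x z : ℝ} (ha : 0 ≤ a) (hb : b ≤ 1)
    (hx : x ∈ Icc a b) (hz : z ∈ Icc a b) :
    |pl n y c x - pl n y c z| ≤ ∫ s in a..b, |plD n y c s| := by
  have hbm := plD_bm n y c
  have hii : ∀ {p q : ℝ}, p ∈ Icc a b → q ∈ Icc a b →
      IntervalIntegrable (fun s => |plD n y c s|) volume p q := by
    intro p q hp hq
    refine hbm.abs.ii.mono_set ?_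
    rw [uIcc_of_le zero_le_one]
    exact uIcc_subset_Icc ⟨ha.trans hp.1, hp.2.trans hb⟩ ⟨ha.trans hq.1, hq.2.trans hb⟩
  have hab : a ≤ b := hx.1.trans hx.2
  have key : ∀ {p q : ℝ}, p ∈ Icc a b → q ∈ Icc a b → p ≤ q →
      |pl n y c q - pl n y c p| ≤ ∫ s in a..b, |plD n y c s| := by
    intro p q hp hq hpq
    rw [← ftc_off (y := y) (pl_continuous n y c).continuousOn hbm
      (fun x hx hxy => pl_hasDerivAt hM c (Ioo_subset_Icc_self hx) hxy)
      (ha.trans hp.1) hpq (hq.2.trans hb)]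
    refine (intervalIntegral.abs_integral_le_integral_abs hpq).trans ?_
    refine intervalIntegral.integral_mono_interval hp.1 hpq hq.2
      (Filter.Eventually.of_forall fun _ => abs_nonneg _) (hii ⟨le_rfl, hab⟩ ⟨hab, le_rfl⟩)
  rcases le_total z x with h | h
  · exact key hz hx h
  · rw [abs_sub_comm]; exact key hx hz h

/-- Symmetry of the averaging operator moves it onto `φ`, where it is first order accurate:
`g` needs no regularity. This is what replaces the unavailable spatial smoothness of `∂_τ u`. -/
lemma smooth_dual (hM : Mesh n y k) {M : ℕ} (hM1 : 1 ≤ M) (hMk : M * k ≤ 1)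
    {g : ℝ → ℝ} (hg : BM g) {G : ℝ} (hG0 : 0 ≤ G) (hG : ∀ x ∈ Icc (0:ℝ) 1, |g x| ≤ G)
    (c : ℕ → ℝ) :
    |∫ x in (0:ℝ)..1, (g x - pl n y (smooth n y M g) x) * pl n y c x|
      ≤ 32 / M * G * ∫ x in (0:ℝ)..1, |plD n y c x| := by
  have hM0 : (0:ℝ) < M := by exact_mod_cast hM1
  set φ := pl n y c with hφ
  have hφb : BM φ := pl_bm _ _ _
  -- `F j` is the total variation of `φ` on the part of `[0,1]` left of `(j - 2) / M`
  set F : ℕ → ℝ := fun j => ∫ s in (0:ℝ)..(max 0 (min 1 (((j:ℝ) - 2) / M))), |plD n y c s| with hF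
  set V := ∫ x in (0:ℝ)..1, |plD n y c x| with hV
  have hpt : ∀ j : ℕ, max 0 (min 1 (((j:ℝ) - 2) / M)) ∈ Icc (0:ℝ) 1 := fun j =>
    ⟨le_max_left _ _, max_le zero_le_one (min_le_left _ _)⟩
  have hii : ∀ {p q : ℝ}, p ∈ Icc (0:ℝ) 1 → q ∈ Icc (0:ℝ) 1 →
      IntervalIntegrable (fun s => |plD n y c s|) volume p q := by
    intro p q hp hq
    refine (plD_bm n y c).abs.ii.mono_set ?_
    rw [uIcc_of_le zero_le_one]
    exact uIcc_subset_Icc hp hq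
  have hF0 : ∀ j, 0 ≤ F j := fun j =>
    intervalIntegral.integral_nonneg (hpt j).1 fun _ _ => abs_nonneg _
  have hFV : ∀ j, F j ≤ V := fun j =>
    intervalIntegral.integral_mono_interval le_rfl (hpt j).1 (hpt j).2
      (Filter.Eventually.of_forall fun _ => abs_nonneg _)
      (hii ⟨le_rfl, zero_le_one⟩ ⟨zero_le_one, le_rfl⟩)
  have hterm : ∀ j ∈ Finset.range (M + 1),
      |(∫ x in (0:ℝ)..1, g x * chi n y M j x * φ x)
        - mean n y M g j * ∫ x in (0:ℝ)..1, chi n y M j x * φ x|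
      ≤ 8 / M * G * (F (j + 4) - F j) := by
    intro j hj
    have hjM : (j:ℝ) ≤ M := by exact_mod_cast Nat.lt_succ_iff.1 (Finset.mem_range.1 hj)
    have hz : (j:ℝ) / M ∈ Icc (0:ℝ) 1 := ⟨by positivity, by rw [div_le_one hM0]; exact hjM⟩
    set z := (j:ℝ) / M with hzdef
    set O := F (j + 4) - F j with hO
    have hpq : max 0 (min 1 (((j:ℝ) - 2) / M)) ≤ max 0 (min 1 ((((j + 4 : ℕ):ℝ) - 2) / M)) := by
      gcongr; linarith
    have hOeq : O = ∫ s in (max 0 (min 1 (((j:ℝ) - 2) / M)))..(max 0 (min 1 ((((j + 4 : ℕ):ℝ) - 2) / M))),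
        |plD n y c s| := by
      rw [hO, hF]
      exact intervalIntegral.integral_interval_sub_left
        (hii ⟨le_rfl, zero_le_one⟩ (hpt _)) (hii ⟨le_rfl, zero_le_one⟩ (hpt _))
    have hO0 : 0 ≤ O := by
      rw [hOeq]
      exact intervalIntegral.integral_nonneg hpq fun _ _ => abs_nonneg _
    have hmemI : ∀ x ∈ Icc (0:ℝ) 1, ((j:ℝ) - 2 ≤ M * x) → (M * x ≤ (j:ℝ) + 2) →
        x ∈ Icc (max 0 (min 1 (((j:ℝ) - 2) / M))) (max 0 (min 1 ((((j + 4 : ℕ):ℝ) - 2) / M))) := by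
      intro x hx h1 h2
      constructor
      · refine max_le hx.1 ((min_le_right _ _).trans ?_)
        rw [div_le_iff₀ hM0]; linarith
      · refine le_max_of_le_right (le_min hx.2 ?_)
        rw [le_div_iff₀ hM0]; push_cast; linarith
    have hosc : ∀ x ∈ Icc (0:ℝ) 1, chi n y M j x ≠ 0 → |φ x - φ z| ≤ O := by
      intro x hx hne
      rw [hOeq]
      have hMz : (M:ℝ) * z = j := by rw [hzdef]; field_simp
      refine pl_osc hM c (hpt j).1 (hpt (j + 4)).2 ?_
        (hmemI z hz (by rw [hMz]; linarith) (by rw [hMz]; linarith))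
      by_contra hcon
      apply hne
      apply chi_eq_zero hM hMk j hx
      by_contra hcon2
      push Not at hcon2
      exact hcon (hmemI x hx hcon2.1 hcon2.2)
    have hchi := chi_bm (n := n) (y := y) M j
    have hdz : BM (fun x => φ x - φ z) := hφb.sub (BM.const _)
    have ha : |∫ x in (0:ℝ)..1, (g x * (φ x - φ z)) * chi n y M j x|
        ≤ G * O * ∫ x in (0:ℝ)..1, chi n y M j x := by
      refine integral_mul_chi_le hM M j (hg.mul hdz) fun x hx hne => ?_
      rw [abs_mul]
      exact mul_le_mul (hG x hx) (hosc x hx hne) (abs_nonneg _) hG0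
    have hb := integral_mul_chi_le hM M j hg (fun x hx _ => hG x hx)
    have hc := integral_mul_chi_le hM M j hdz hosc
    have e1 : ∫ x in (0:ℝ)..1, g x * chi n y M j x * φ x
        = (∫ x in (0:ℝ)..1, (g x * (φ x - φ z)) * chi n y M j x)
          + φ z * ∫ x in (0:ℝ)..1, g x * chi n y M j x := by
      rw [← intervalIntegral.integral_const_mul, ← intervalIntegral.integral_add
        ((hg.mul hdz).mul hchi).ii ((hg.mul hchi).const_mul _).ii]
      congr 1; funext x; ring
    have e2 : ∫ x in (0:ℝ)..1, chi n y M j x * φ x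
        = (∫ x in (0:ℝ)..1, (φ x - φ z) * chi n y M j x)
          + φ z * ∫ x in (0:ℝ)..1, chi n y M j x := by
      rw [← intervalIntegral.integral_const_mul, ← intervalIntegral.integral_add
        (hdz.mul hchi).ii (hchi.const_mul _).ii]
      congr 1; funext x; ring
    rw [e1, e2]
    unfold mean
    have hm0 := integral_chi_nonneg hM M j
    have hm4 := integral_chi_le hM hM1 hMk hj
    set I := ∫ x in (0:ℝ)..1, chi n y M j x
    set A := ∫ x in (0:ℝ)..1, (g x * (φ x - φ z)) * chi n y M j x
    set B := ∫ x in (0:ℝ)..1, g x * chi n y M j x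
    set C := ∫ x in (0:ℝ)..1, (φ x - φ z) * chi n y M j x
    have hfin : |A + φ z * B - B / I * (C + φ z * I)| ≤ 2 * G * O * I := by
      rcases hm0.eq_or_lt with h | h
      · rw [← h] at ha hb ⊢
        have hA : A = 0 := abs_nonpos_iff.1 (by simpa using ha)
        have hB : B = 0 := abs_nonpos_iff.1 (by simpa using hb)
        rw [hA, hB]; simp
      · have : A + φ z * B - B / I * (C + φ z * I) = A - B / I * C := by field_simp; ring
        rw [this]
        refine (abs_sub _ _).trans ?_
        have h1 : |B / I| ≤ G := by
          rw [abs_div, abs_of_pos h, div_le_iff₀ h]; exact hb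
        have h2 : |B / I * C| ≤ G * (O * I) := by
          rw [abs_mul]
          exact mul_le_mul h1 hc (abs_nonneg _) hG0
        linarith
    refine hfin.trans ?_
    calc 2 * G * O * I ≤ 2 * G * O * (4 / M) := by gcongr
      _ = _ := by ring
  have hsum : ∫ x in (0:ℝ)..1, (g x - pl n y (smooth n y M g) x) * φ x
      = ∑ j ∈ Finset.range (M + 1), ((∫ x in (0:ℝ)..1, g x * chi n y M j x * φ x)
        - mean n y M g j * ∫ x in (0:ℝ)..1, chi n y M j x * φ x) := by
    have h1 : ∀ j ∈ Finset.range (M + 1), IntervalIntegrable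
        (fun x => g x * chi n y M j x * φ x - mean n y M g j * (chi n y M j x * φ x)) volume 0 1 :=
      fun j _ => (((hg.mul (chi_bm M j)).mul hφb).sub
        (((chi_bm M j).mul hφb).const_mul _)).ii
    have h2 : ∀ j ∈ Finset.range (M + 1), (∫ x in (0:ℝ)..1, g x * chi n y M j x * φ x)
        - mean n y M g j * ∫ x in (0:ℝ)..1, chi n y M j x * φ x
        = ∫ x in (0:ℝ)..1,
          (g x * chi n y M j x * φ x - mean n y M g j * (chi n y M j x * φ x)) := by
      intro j _
      rw [intervalIntegral.integral_sub ((hg.mul (chi_bm M j)).mul hφb).ii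
        (((chi_bm M j).mul hφb).const_mul _).ii, intervalIntegral.integral_const_mul]
    rw [Finset.sum_congr rfl h2, ← intervalIntegral.integral_finsetSum h1]
    refine intervalIntegral.integral_congr fun x hx => ?_
    rw [uIcc_of_le zero_le_one] at hx
    rw [pl_smooth, Finset.sum_sub_distrib, ← Finset.sum_mul, ← Finset.mul_sum, sum_chi hM M hx,
      sub_mul, Finset.sum_mul, mul_one]
    congr 1
    exact Finset.sum_congr rfl fun _ _ => by ring
  have htel : ∑ j ∈ Finset.range (M + 1), (F (j + 4) - F j) ≤ 4 * V := by
    have hd : ∀ r : ℕ, ∑ j ∈ Finset.range (M + 1), (F (j + r + 1) - F (j + r)) ≤ V := by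
      intro r
      have := Finset.sum_range_sub (fun j => F (j + r)) (M + 1)
      simp only [Nat.add_right_comm _ 1 r] at this
      rw [this]
      linarith [hFV (M + r + 1), hF0 (0 + r)]
    have he : ∀ j, F (j + 4) - F j = (F (j + 0 + 1) - F (j + 0)) + (F (j + 1 + 1) - F (j + 1))
        + (F (j + 2 + 1) - F (j + 2)) + (F (j + 3 + 1) - F (j + 3)) := by
      intro j; simp only [Nat.add_assoc, Nat.add_zero]; norm_num
    rw [Finset.sum_congr rfl fun j _ => he j]
    simp only [Finset.sum_add_distrib]
    linarith [hd 0, hd 1, hd 2, hd 3]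
  rw [hsum]
  calc |∑ j ∈ Finset.range (M + 1), ((∫ x in (0:ℝ)..1, g x * chi n y M j x * φ x)
        - mean n y M g j * ∫ x in (0:ℝ)..1, chi n y M j x * φ x)|
      ≤ ∑ j ∈ Finset.range (M + 1), 8 / M * G * (F (j + 4) - F j) :=
        (Finset.abs_sum_le_sum_abs _ _).trans (Finset.sum_le_sum hterm)
    _ = 8 / M * G * ∑ j ∈ Finset.range (M + 1), (F (j + 4) - F j) := by rw [Finset.mul_sum]
    _ ≤ 8 / M * G * (4 * V) := by gcongr
    _ = _ := by ring

/-! ### Approximation of smooth functions -/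

lemma interp_bounds (hM : Mesh n y k) {f f' f'' : ℝ → ℝ} {B : ℝ}
    (hf : ∀ x ∈ Icc (0:ℝ) 1, HasDerivWithinAt f (f' x) (Icc 0 1) x)
    (hf' : ∀ x ∈ Icc (0:ℝ) 1, HasDerivWithinAt f' (f'' x) (Icc 0 1) x)
    (hB : ∀ x ∈ Icc (0:ℝ) 1, |f'' x| ≤ B) :
    (∀ x ∈ Icc (0:ℝ) 1, |f x - pl n y (fun i => f (y i)) x| ≤ B * k ^ 2) ∧
    (∀ x ∈ Icc (0:ℝ) 1, x ∉ range y → |f' x - plD n y (fun i => f (y i)) x| ≤ B * k) := by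
  have hB0 : 0 ≤ B := (abs_nonneg _).trans (hB 0 ⟨le_rfl, zero_le_one⟩)
  have hfc : ContinuousOn f (Icc 0 1) := fun x hx => (hf x hx).continuousWithinAt
  have hlip : ∀ x ∈ Icc (0:ℝ) 1, ∀ z ∈ Icc (0:ℝ) 1, |f' x - f' z| ≤ B * |x - z| := fun x hx z hz =>
    Convex.norm_image_sub_le_of_norm_hasDerivWithin_le hf' hB (convex_Icc 0 1) hz hx
  have mvt : ∀ a ∈ Icc (0:ℝ) 1, ∀ b ∈ Icc (0:ℝ) 1, a < b →
      ∃ ξ ∈ Ioo a b, f' ξ = (f b - f a) / (b - a) := fun a ha b hb hab =>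
    exists_hasDerivAt_eq_slope f f' hab (hfc.mono (Icc_subset_Icc ha.1 hb.2)) fun x hx =>
      (hf x ⟨ha.1.trans hx.1.le, hx.2.le.trans hb.2⟩).hasDerivAt
        (Icc_mem_nhds (ha.1.trans_lt hx.1) (hx.2.trans_le hb.2))
  have slope : ∀ m, m < n → ∀ x ∈ Icc (y m) (y (m + 1)),
      |f' x - (f (y (m + 1)) - f (y m)) / (y (m + 1) - y m)| ≤ B * k := by
    intro m hm x hx
    obtain ⟨ξ, hξ, h⟩ := mvt _ (hM.mem hm.le) _ (hM.mem hm) (hM.lt m hm)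
    rw [← h]
    refine (hlip x (hM.cell_subset hm hx) ξ (hM.cell_subset hm (Ioo_subset_Icc_self hξ))).trans ?_
    refine mul_le_mul_of_nonneg_left ?_ hB0
    have := hM.le m hm
    rw [abs_le]
    constructor <;> linarith [hx.1, hx.2, hξ.1, hξ.2]
  constructor
  · intro x hx
    obtain ⟨m, hm, hxm⟩ := hM.exists_cell hx
    rw [pl_cell hM _ hm hxm]
    rcases hxm.1.eq_or_lt with h | h
    · rw [← h]; simp only [sub_self, zero_div, mul_zero, add_zero, abs_zero]; positivity
    · obtain ⟨η, hη, he⟩ := mvt _ (hM.mem hm.le) x hx h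
      have h1 : f x - (f (y m) + (f (y (m + 1)) - f (y m)) * ((x - y m) / (y (m + 1) - y m)))
          = (f' η - (f (y (m + 1)) - f (y m)) / (y (m + 1) - y m)) * (x - y m) := by
        have : f' η * (x - y m) = f x - f (y m) := by
          rw [he, div_mul_cancel₀ _ (sub_pos.2 h).ne']
        rw [sub_mul (f' η), this]; ring
      rw [h1, abs_mul, pow_two, ← mul_assoc]
      refine mul_le_mul (slope m hm η ⟨hη.1.le, hη.2.le.trans hxm.2⟩) ?_ (abs_nonneg _)
        (mul_nonneg hB0 hM.k_pos.le)
      rw [abs_of_pos (sub_pos.2 h)]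
      linarith [hM.le m hm, hxm.2]
  · intro x hx hxy
    obtain ⟨m, hm, hxm⟩ := hM.exists_open_cell hx hxy
    rw [plD_cell hM _ hm hxm]
    exact slope m hm x (Ioo_subset_Icc_self hxm)

/-- The interpolation error `f - I_k f`. -/
noncomputable def interpErr (n : ℕ) (y : ℕ → ℝ) (f : ℝ → ℝ) (x : ℝ) : ℝ :=
  f x - pl n y (fun i => f (y i)) x

/-- Nodal values of the quasi-interpolant `Q f = I f + S (f - I f)`, where `I` is nodal
interpolation and `S` the averaging operator `smooth`. -/
noncomputable def quasi (n : ℕ) (y : ℕ → ℝ) (M : ℕ) (f : ℝ → ℝ) (i : ℕ) : ℝ :=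
  f (y i) + smooth n y M (interpErr n y f) i

lemma interpErr_bm {f : ℝ → ℝ} (hf : BM f) : BM (interpErr n y f) := hf.sub (pl_bm _ _ _)

lemma sub_quasi (M : ℕ) (f : ℝ → ℝ) (x : ℝ) : f x - pl n y (quasi n y M f) x
    = interpErr n y f x - pl n y (smooth n y M (interpErr n y f)) x := by
  have := pl_add n y (fun i => f (y i)) (smooth n y M (interpErr n y f)) x
  unfold quasi
  rw [this]
  unfold interpErr
  ring

lemma quasi_bounds (hM : Mesh n y k) {M : ℕ} (hMk : M * k ≤ 1) (hk1 : k ≤ 1) {f f' f'' : ℝ → ℝ}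
    {B : ℝ} (hf : ∀ x ∈ Icc (0:ℝ) 1, HasDerivWithinAt f (f' x) (Icc 0 1) x)
    (hf' : ∀ x ∈ Icc (0:ℝ) 1, HasDerivWithinAt f' (f'' x) (Icc 0 1) x)
    (hB : ∀ x ∈ Icc (0:ℝ) 1, |f'' x| ≤ B) :
    (∀ x ∈ Icc (0:ℝ) 1, |f x - pl n y (quasi n y M f) x| ≤ 3 * B * k) ∧
    (∀ x ∈ Icc (0:ℝ) 1, x ∉ range y → |f' x - plD n y (quasi n y M f) x| ≤ 3 * B * k) ∧
    (∀ i, i ≤ n → |smooth n y M (interpErr n y f) i| ≤ B * k) := by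
  have hB0 : 0 ≤ B := (abs_nonneg _).trans (hB 0 ⟨le_rfl, zero_le_one⟩)
  have hk0 := hM.k_pos
  obtain ⟨h1, h2⟩ := interp_bounds hM hf hf' hB
  have hbm : BM (interpErr n y f) := interpErr_bm
    (BM.of_continuousOn fun x hx => (hf x hx).continuousWithinAt)
  have hW0 : 0 ≤ B * k ^ 2 := by positivity
  have hWk : B * k ^ 2 ≤ B * k := mul_le_mul_of_nonneg_left (by nlinarith) hB0
  have hs : ∀ i, i ≤ n → |smooth n y M (interpErr n y f) i| ≤ B * k ^ 2 :=
    fun i hi => smooth_le hM M hbm hW0 h1 hi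
  refine ⟨fun x hx => ?_, fun x hx hxy => ?_, fun i hi => (hs i hi).trans hWk⟩
  · rw [sub_quasi]
    refine (abs_sub _ _).trans ?_
    have ha : |interpErr n y f x| ≤ B * k ^ 2 := h1 x hx
    have hb := pl_abs_le hM hs hx
    have : 0 ≤ B * k := by positivity
    linarith
  · have h3 : f' x - plD n y (quasi n y M f) x
        = (f' x - plD n y (fun i => f (y i)) x) - plD n y (smooth n y M (interpErr n y f)) x := by
      have := plD_add n y (fun i => f (y i)) (smooth n y M (interpErr n y f)) x
      unfold quasi
      rw [this]; ring
    rw [h3]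
    refine (abs_sub _ _).trans ?_
    have ha := h2 x hx hxy
    have hb := plD_smooth_le hM M hbm hW0 h1 hx hxy
    have hc : 2 * M * (B * k ^ 2) ≤ 2 * (B * k) := by
      have : (M * k) * (B * k) ≤ 1 * (B * k) := mul_le_mul_of_nonneg_right hMk (by positivity)
      nlinarith
    linarith

lemma exists_scale (hk0 : 0 < k) (hk1 : k ≤ 1) :
    ∃ M : ℕ, 1 ≤ M ∧ (M:ℝ) * k ≤ 1 ∧ 1 / (M:ℝ) ≤ 2 * k := by
  have h1 : 1 ≤ 1 / k := by rw [le_div_iff₀ hk0]; linarith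
  have hM1 : 1 ≤ ⌊1 / k⌋₊ := Nat.le_floor (by simpa using h1)
  refine ⟨⌊1 / k⌋₊, hM1, ?_, ?_⟩
  · have := Nat.floor_le (zero_le_one.trans h1)
    rwa [le_div_iff₀ hk0] at this
  · have h2 := Nat.lt_floor_add_one (1 / k)
    have h3 : (1:ℝ) ≤ (⌊1 / k⌋₊ : ℝ) := by exact_mod_cast hM1
    rw [div_lt_iff₀ hk0] at h2
    rw [div_le_iff₀ (by linarith)]
    nlinarith

/-! ### The trace inequality -/

lemma trace_one (hM : Mesh n y k) (c : ℕ → ℝ) {ε : ℝ} (hε : 0 < ε) :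
    pl n y c 1 ^ 2 ≤ ε * (∫ x in (0:ℝ)..1, plD n y c x ^ 2)
      + (1 + 1 / ε) * ∫ x in (0:ℝ)..1, pl n y c x ^ 2 := by
  have hb := pl_bm n y c
  have hb' := plD_bm n y c
  have hid : BM (fun x => x) := BM.of_continuous continuous_id
  have hc := pl_continuous n y c
  have h := ftc_off (y := y) (f := fun x => x * pl n y c x ^ 2)
    (f' := fun x => pl n y c x ^ 2 + x * (2 * (pl n y c x * plD n y c x)))
    (by fun_prop) (hb.sq.add (hid.mul ((hb.mul hb').const_mul 2)))
    (fun x hx hxy => by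
      have := (hasDerivAt_id x).mul ((pl_hasDerivAt hM c (Ioo_subset_Icc_self hx) hxy).pow 2)
      refine this.congr_deriv ?_
      simp only [id, Pi.pow_apply]
      push_cast
      ring) le_rfl zero_le_one le_rfl
  simp only [one_mul, zero_mul, sub_zero] at h
  rw [← h, ← intervalIntegral.integral_const_mul, ← intervalIntegral.integral_const_mul,
    ← intervalIntegral.integral_add (hb'.sq.const_mul _).ii (hb.sq.const_mul _).ii]
  refine intervalIntegral.integral_mono_on zero_le_one
    (hb.sq.add (hid.mul ((hb.mul hb').const_mul 2))).ii
    ((hb'.sq.const_mul _).add (hb.sq.const_mul _)).ii fun x hx => ?_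
  have h1 : 2 * |pl n y c x * plD n y c x| ≤ ε * plD n y c x ^ 2 + 1 / ε * pl n y c x ^ 2 := by
    rw [abs_mul]
    have := sq_nonneg (ε * |plD n y c x| - |pl n y c x|)
    have h2 : 0 ≤ 1 / ε * (ε * |plD n y c x| - |pl n y c x|) ^ 2 := by positivity
    have h3 : 1 / ε * (ε * |plD n y c x| - |pl n y c x|) ^ 2
        = ε * plD n y c x ^ 2 + 1 / ε * pl n y c x ^ 2 - 2 * (|pl n y c x| * |plD n y c x|) := by
      rw [← sq_abs (plD n y c x), ← sq_abs (pl n y c x)]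
      field_simp
      ring
    linarith
  have h4 : x * (2 * (pl n y c x * plD n y c x)) ≤ 2 * |pl n y c x * plD n y c x| := by
    have := le_abs_self (pl n y c x * plD n y c x)
    have := abs_nonneg (pl n y c x * plD n y c x)
    nlinarith [hx.1, hx.2]
  linarith

lemma trace_zero (hM : Mesh n y k) (c : ℕ → ℝ) {ε : ℝ} (hε : 0 < ε) :
    pl n y c 0 ^ 2 ≤ ε * (∫ x in (0:ℝ)..1, plD n y c x ^ 2)
      + (1 + 1 / ε) * ∫ x in (0:ℝ)..1, pl n y c x ^ 2 := by
  have hb := pl_bm n y c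
  have hb' := plD_bm n y c
  have hid : BM (fun x => x - 1) := BM.of_continuous (by fun_prop)
  have hc := pl_continuous n y c
  have h := ftc_off (y := y) (f := fun x => (x - 1) * pl n y c x ^ 2)
    (f' := fun x => pl n y c x ^ 2 + (x - 1) * (2 * (pl n y c x * plD n y c x)))
    (by fun_prop) (hb.sq.add (hid.mul ((hb.mul hb').const_mul 2)))
    (fun x hx hxy => by
      have := ((hasDerivAt_id x).sub_const 1).mul
        ((pl_hasDerivAt hM c (Ioo_subset_Icc_self hx) hxy).pow 2)
      refine this.congr_deriv ?_
      simp only [id, Pi.pow_apply]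
      push_cast
      ring) le_rfl zero_le_one le_rfl
  have h' : ∫ x in (0:ℝ)..1, (pl n y c x ^ 2 + (x - 1) * (2 * (pl n y c x * plD n y c x)))
      = pl n y c 0 ^ 2 := by rw [h]; ring
  rw [← h', ← intervalIntegral.integral_const_mul, ← intervalIntegral.integral_const_mul,
    ← intervalIntegral.integral_add (hb'.sq.const_mul _).ii (hb.sq.const_mul _).ii]
  refine intervalIntegral.integral_mono_on zero_le_one
    (hb.sq.add (hid.mul ((hb.mul hb').const_mul 2))).ii
    ((hb'.sq.const_mul _).add (hb.sq.const_mul _)).ii fun x hx => ?_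
  have h1 : 2 * |pl n y c x * plD n y c x| ≤ ε * plD n y c x ^ 2 + 1 / ε * pl n y c x ^ 2 := by
    rw [abs_mul]
    have h2 : 0 ≤ 1 / ε * (ε * |plD n y c x| - |pl n y c x|) ^ 2 := by positivity
    have h3 : 1 / ε * (ε * |plD n y c x| - |pl n y c x|) ^ 2
        = ε * plD n y c x ^ 2 + 1 / ε * pl n y c x ^ 2 - 2 * (|pl n y c x| * |plD n y c x|) := by
      rw [← sq_abs (plD n y c x), ← sq_abs (pl n y c x)]
      field_simp
      ring
    linarith
  have h4 : (x - 1) * (2 * (pl n y c x * plD n y c x)) ≤ 2 * |pl n y c x * plD n y c x| := by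
    have := neg_abs_le (pl n y c x * plD n y c x)
    have := abs_nonneg (pl n y c x * plD n y c x)
    nlinarith [hx.1, hx.2]
  linarith

/-! ### Time dependence -/

lemma quad_expand (J : ℕ) {R : ℕ → ℝ → ℝ} (hR : ∀ m, BM (R m)) (a b : ℕ → ℝ) :
    ∫ x in (0:ℝ)..1, (∑ m ∈ Finset.range J, a m * R m x) * (∑ l ∈ Finset.range J, b l * R l x)
      = ∑ m ∈ Finset.range J, ∑ l ∈ Finset.range J, a m * b l * ∫ x in (0:ℝ)..1, R m x * R l x := by
  have h1 : ∀ m l, IntervalIntegrable (fun x => a m * b l * (R m x * R l x)) volume 0 1 :=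
    fun m l => (((hR m).mul (hR l)).const_mul _).ii
  simp only [← intervalIntegral.integral_const_mul]
  have h2 : ∀ m ∈ Finset.range J, ∑ l ∈ Finset.range J,
      ∫ x in (0:ℝ)..1, a m * b l * (R m x * R l x)
      = ∫ x in (0:ℝ)..1, ∑ l ∈ Finset.range J, a m * b l * (R m x * R l x) := fun m _ =>
    (intervalIntegral.integral_finsetSum fun l _ => h1 m l).symm
  rw [Finset.sum_congr rfl h2, ← intervalIntegral.integral_finsetSum fun m _ => by
    have := IntervalIntegrable.sum (Finset.range J) fun l _ => h1 m l
    rwa [Finset.sum_fn] at this]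
  congr 1
  funext x
  rw [Finset.sum_mul_sum]
  exact Finset.sum_congr rfl fun m _ => Finset.sum_congr rfl fun l _ => by ring

/-- The shape functions `1, ramp y 0, ramp y 1, …`. -/
noncomputable def shape (y : ℕ → ℝ) : ℕ → ℝ → ℝ
  | 0 => fun _ => 1
  | m + 1 => ramp y m

/-- Coordinates of `pl n y c` with respect to the shape functions. -/
def coord (c : ℕ → ℝ) : ℕ → ℝ
  | 0 => c 0
  | m + 1 => c (m + 1) - c m

lemma shape_bm (y : ℕ → ℝ) (m : ℕ) : BM (shape y m) := by
  cases m with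
  | zero => exact BM.const 1
  | succ m => exact BM.of_continuous (ramp_continuous y m)

lemma pl_eq_shape (n : ℕ) (y c : ℕ → ℝ) (x : ℝ) :
    pl n y c x = ∑ m ∈ Finset.range (n + 1), coord c m * shape y m x := by
  rw [Finset.sum_range_succ']
  simp only [coord, shape, mul_one]
  unfold pl
  ring

lemma pl_time_deriv (n : ℕ) (y : ℕ → ℝ) {c : ℝ → ℕ → ℝ} {c' : ℕ → ℝ} {τ : ℝ}
    (hc : ∀ i, i ≤ n → HasDerivAt (fun t => c t i) (c' i) τ) (x : ℝ) :
    HasDerivAt (fun t => pl n y (c t) x) (pl n y c' x) τ := by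
  unfold pl
  refine (hc 0 (Nat.zero_le _)).add (HasDerivAt.fun_sum fun m hm => ?_)
  have hmn := Finset.mem_range.1 hm
  exact ((hc (m + 1) hmn).sub (hc m hmn.le)).mul_const _

lemma sq_hasDerivAt (n : ℕ) (y : ℕ → ℝ) {c : ℝ → ℕ → ℝ} {c' : ℕ → ℝ} {τ : ℝ}
    (hc : ∀ i, i ≤ n → HasDerivAt (fun t => c t i) (c' i) τ) :
    HasDerivAt (fun t => ∫ x in (0:ℝ)..1, pl n y (c t) x ^ 2)
      (2 * ∫ x in (0:ℝ)..1, pl n y c' x * pl n y (c τ) x) τ := by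
  have hd : ∀ m ∈ Finset.range (n + 1), HasDerivAt (fun t => coord (c t) m) (coord c' m) τ := by
    intro m hm
    have hmn := Finset.mem_range.1 hm
    cases m with
    | zero => exact hc 0 (Nat.zero_le _)
    | succ m => exact (hc (m + 1) (by omega)).sub (hc m (by omega))
  simp only [pow_two, pl_eq_shape, quad_expand (n + 1) (shape_bm y)]
  have := HasDerivAt.fun_sum fun m hm => HasDerivAt.fun_sum fun l hl =>
    ((hd m hm).mul (hd l hl)).mul_const (∫ x in (0:ℝ)..1, shape y m x * shape y l x)
  refine this.congr_deriv ?_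
  simp only [add_mul, Finset.sum_add_distrib]
  rw [two_mul]
  congr 1
  rw [Finset.sum_comm]
  refine Finset.sum_congr rfl fun m _ => Finset.sum_congr rfl fun l _ => ?_
  simp only [mul_comm (shape y l _)]
  ring

lemma sq_continuousOn (n : ℕ) (y : ℕ → ℝ) {c : ℝ → ℕ → ℝ} {s : Set ℝ}
    (hc : ∀ i, i ≤ n → ContinuousOn (fun t => c t i) s) :
    ContinuousOn (fun t => ∫ x in (0:ℝ)..1, pl n y (c t) x ^ 2) s := by
  have hd : ∀ m ∈ Finset.range (n + 1), ContinuousOn (fun t => coord (c t) m) s := by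
    intro m hm
    have hmn := Finset.mem_range.1 hm
    cases m with
    | zero => exact hc 0 (Nat.zero_le _)
    | succ m => exact (hc (m + 1) (by omega)).sub (hc m (by omega))
  simp only [pow_two, pl_eq_shape, quad_expand (n + 1) (shape_bm y)]
  exact continuousOn_finsetSum _ fun m hm => continuousOn_finsetSum _ fun l hl =>
    ((hd m hm).mul (hd l hl)).mul continuousOn_const

lemma sqD_continuousOn (n : ℕ) (y : ℕ → ℝ) {c : ℝ → ℕ → ℝ} {s : Set ℝ}
    (hc : ∀ i, i ≤ n → ContinuousOn (fun t => c t i) s) :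
    ContinuousOn (fun t => ∫ x in (0:ℝ)..1, plD n y (c t) x ^ 2) s := by
  have hd : ∀ m ∈ Finset.range n, ContinuousOn (fun t => c t (m + 1) - c t m) s := fun m hm =>
    (hc (m + 1) (Finset.mem_range.1 hm)).sub (hc m (Finset.mem_range.1 hm).le)
  simp only [pow_two, plD]
  have := fun t => quad_expand n (rampD_bm y) (fun m => c t (m + 1) - c t m)
    (fun m => c t (m + 1) - c t m)
  simp only [this]
  exact continuousOn_finsetSum _ fun m hm => continuousOn_finsetSum _ fun l hl =>
    ((hd m hm).mul (hd l hl)).mul continuousOn_const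

/-- Continuity and differentiation of `t ↦ ∫₀¹ f(t,x) g(x) dx`. -/
lemma param_integral {T F G : ℝ} {f ft : ℝ → ℝ → ℝ} {g : ℝ → ℝ} (hg : BM g)
    (hf : ∀ t ∈ Icc (0:ℝ) T, BM (f t)) (hft : ∀ t ∈ Icc (0:ℝ) T, BM (ft t))
    (hd : ∀ x ∈ Icc (0:ℝ) 1, ∀ t ∈ Icc (0:ℝ) T, HasDerivAt (fun s => f s x) (ft t x) t)
    (hF : ∀ t ∈ Icc (0:ℝ) T, ∀ x ∈ Icc (0:ℝ) 1, |f t x| ≤ F)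
    (hG : ∀ t ∈ Icc (0:ℝ) T, ∀ x ∈ Icc (0:ℝ) 1, |ft t x| ≤ G) :
    ContinuousOn (fun t => ∫ x in (0:ℝ)..1, f t x * g x) (Icc 0 T) ∧
    ∀ t ∈ Ioo (0:ℝ) T, HasDerivAt (fun t => ∫ x in (0:ℝ)..1, f t x * g x)
      (∫ x in (0:ℝ)..1, ft t x * g x) t := by
  have hI : uIoc (0:ℝ) 1 = Ioc 0 1 := uIoc_of_le zero_le_one
  constructor
  · intro t ht
    refine intervalIntegral.continuousWithinAt_of_dominated_interval (bound := fun x => F * |g x|)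
      ?_ ?_ (hg.abs.const_mul F).ii ?_
    · filter_upwards [self_mem_nhdsWithin] with s hs
      rw [hI]; exact ((hf s hs).mul hg).1
    · filter_upwards [self_mem_nhdsWithin] with s hs
      refine Filter.Eventually.of_forall fun x hx => ?_
      rw [hI] at hx
      rw [Real.norm_eq_abs, abs_mul]
      exact mul_le_mul_of_nonneg_right (hF s hs x (Ioc_subset_Icc_self hx)) (abs_nonneg _)
    · refine Filter.Eventually.of_forall fun x hx => ?_
      rw [hI] at hx
      exact ((hd x (Ioc_subset_Icc_self hx) t ht).continuousAt.mul
        continuousAt_const).continuousWithinAt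
  · intro t ht
    have hmem : Icc (0:ℝ) T ∈ nhds t := Icc_mem_nhds ht.1 ht.2
    refine (intervalIntegral.hasDerivAt_integral_of_dominated_loc_of_deriv_le
      (F' := fun t x => ft t x * g x) (bound := fun x => G * |g x|) hmem ?_
      ((hf t (Ioo_subset_Icc_self ht)).mul hg).ii ?_ ?_ (hg.abs.const_mul G).ii ?_).2
    · filter_upwards [hmem] with s hs
      rw [hI]; exact ((hf s hs).mul hg).1
    · rw [hI]; exact ((hft t (Ioo_subset_Icc_self ht)).mul hg).1
    · refine Filter.Eventually.of_forall fun x hx s hs => ?_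
      rw [hI] at hx
      rw [Real.norm_eq_abs, abs_mul]
      exact mul_le_mul_of_nonneg_right (hG s hs x (Ioc_subset_Icc_self hx)) (abs_nonneg _)
    · refine Filter.Eventually.of_forall fun x hx s hs => ?_
      rw [hI] at hx
      exact (hd x (Ioc_subset_Icc_self hx) s hs).mul_const _

/-- The quasi-interpolation commutes with the time derivative. -/
lemma quasi_time (hM : Mesh n y k) (M : ℕ) {T F G : ℝ} {f ft : ℝ → ℝ → ℝ}
    (hf : ∀ t ∈ Icc (0:ℝ) T, BM (f t)) (hft : ∀ t ∈ Icc (0:ℝ) T, BM (ft t))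
    (hd : ∀ x ∈ Icc (0:ℝ) 1, ∀ t ∈ Icc (0:ℝ) T, HasDerivAt (fun s => f s x) (ft t x) t)
    (hF : ∀ t ∈ Icc (0:ℝ) T, ∀ x ∈ Icc (0:ℝ) 1, |f t x| ≤ F)
    (hG : ∀ t ∈ Icc (0:ℝ) T, ∀ x ∈ Icc (0:ℝ) 1, |ft t x| ≤ G) {i : ℕ} (hi : i ≤ n) :
    ContinuousOn (fun t => quasi n y M (f t) i) (Icc 0 T) ∧
    ∀ t ∈ Ioo (0:ℝ) T, HasDerivAt (fun t => quasi n y M (f t) i) (quasi n y M (ft t) i) t := by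
  have herr : ∀ {p : ℝ → ℝ} {P : ℝ}, (∀ x ∈ Icc (0:ℝ) 1, |p x| ≤ P) →
      ∀ x ∈ Icc (0:ℝ) 1, |interpErr n y p x| ≤ P + P := by
    intro p P hp x hx
    exact (abs_sub _ _).trans (add_le_add (hp x hx)
      (pl_abs_le hM (fun i hi => hp _ (hM.mem hi)) hx))
  have hmean : ∀ j, _ := fun j => param_integral (g := chi n y M j)
    (f := fun t => interpErr n y (f t)) (ft := fun t => interpErr n y (ft t)) (chi_bm M j)
    (fun t ht => interpErr_bm (hf t ht)) (fun t ht => interpErr_bm (hft t ht))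
    (fun x hx t ht => (hd x hx t ht).sub
      (pl_time_deriv n y (fun i hi => hd (y i) (hM.mem hi) t ht) x))
    (fun t ht => herr (hF t ht)) (fun t ht => herr (hG t ht))
  unfold quasi smooth mean
  constructor
  · refine ContinuousOn.add (fun t ht => (hd _ (hM.mem hi) t ht).continuousAt.continuousWithinAt) ?_
    exact continuousOn_finsetSum _ fun j _ =>
      ((hmean j).1.div_const _).mul continuousOn_const
  · intro t ht
    exact (hd _ (hM.mem hi) t (Ioo_subset_Icc_self ht)).add
      (HasDerivAt.fun_sum fun j _ => (((hmean j).2 t ht).div_const _).mul_const _)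

/-- Grönwall's inequality with a dissipation term `D`. -/
lemma gronwall_dissip {T κ C q : ℝ} (hT : 0 ≤ T) (hκ : 0 ≤ κ) (hC : 0 ≤ C) (hq : 0 ≤ q)
    {E E' D : ℝ → ℝ} (hEc : ContinuousOn E (Icc 0 T)) (hDc : ContinuousOn D (Icc 0 T))
    (hE0 : ∀ t ∈ Icc (0:ℝ) T, 0 ≤ E t) (hD0 : ∀ t ∈ Icc (0:ℝ) T, 0 ≤ D t)
    (hE : ∀ t ∈ Ioo (0:ℝ) T, HasDerivAt E (E' t) t)
    (hineq : ∀ t ∈ Ioo (0:ℝ) T, E' t ≤ -κ * D t + C * (E t + q)) :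
    (∀ t ∈ Icc (0:ℝ) T, E t ≤ (E 0 + q) * Real.exp (C * T)) ∧
    κ * (∫ t in (0:ℝ)..T, D t) ≤ (E 0 + q) * Real.exp (C * T) := by
  have hDi : IntegrableOn D (uIcc 0 T) := by
    rw [uIcc_of_le hT]; exact hDc.integrableOn_Icc
  set P : ℝ → ℝ := fun t => ∫ s in (0:ℝ)..t, D s with hP
  have hPc : ContinuousOn P (Icc 0 T) := by
    have := intervalIntegral.continuousOn_primitive_interval hDi
    rwa [uIcc_of_le hT] at this
  have hPd : ∀ t ∈ Ioo (0:ℝ) T, HasDerivAt P (D t) t := by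
    intro t ht
    refine intervalIntegral.integral_hasDerivAt_right ?_
      (ContinuousOn.stronglyMeasurableAtFilter isOpen_Ioo (hDc.mono Ioo_subset_Icc_self) t ht)
      (hDc.continuousAt (Icc_mem_nhds ht.1 ht.2))
    refine ContinuousOn.intervalIntegrable (hDc.mono ?_)
    rw [uIcc_of_le ht.1.le]
    exact Icc_subset_Icc le_rfl ht.2.le
  have hP0 : ∀ t ∈ Icc (0:ℝ) T, 0 ≤ P t := fun t ht =>
    intervalIntegral.integral_nonneg ht.1 fun s hs => hD0 s ⟨hs.1, hs.2.trans ht.2⟩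
  set Z : ℝ → ℝ := fun t => Real.exp (-(C * t)) * (E t + κ * P t + q) with hZ
  have hZd : ∀ t ∈ Ioo (0:ℝ) T, HasDerivAt Z (Real.exp (-(C * t)) * (-C) * (E t + κ * P t + q)
      + Real.exp (-(C * t)) * (E' t + κ * D t)) t := by
    intro t ht
    have h1 : HasDerivAt (fun t => Real.exp (-(C * t))) (Real.exp (-(C * t)) * (-C)) t := by
      have := (((hasDerivAt_id t).const_mul C).neg).exp
      exact this.congr_deriv (by simp)
    exact h1.mul (((hE t ht).add ((hPd t ht).const_mul κ)).add_const q)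
  have hanti : AntitoneOn Z (Icc 0 T) := by
    refine antitoneOn_of_deriv_nonpos (convex_Icc 0 T) ?_ ?_ ?_
    · exact ContinuousOn.mul (by fun_prop)
        ((hEc.add (continuousOn_const.mul hPc)).add continuousOn_const)
    · rw [interior_Icc]
      exact fun t ht => (hZd t ht).differentiableAt.differentiableWithinAt
    · rw [interior_Icc]
      intro t ht
      rw [(hZd t ht).deriv]
      have h1 := hineq t ht
      have h2 := hP0 t (Ioo_subset_Icc_self ht)
      have h3 : 0 ≤ C * (κ * P t) := by positivity
      have h4 := Real.exp_pos (-(C * t))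
      have : E' t + κ * D t - C * (E t + κ * P t + q) ≤ 0 := by linarith
      nlinarith
  have hmain : ∀ t ∈ Icc (0:ℝ) T, E t + κ * P t ≤ (E 0 + q) * Real.exp (C * T) := by
    intro t ht
    have h1 := hanti ⟨le_rfl, hT⟩ ht ht.1
    simp only [hZ, hP, intervalIntegral.integral_same, mul_zero, neg_zero, Real.exp_zero, one_mul,
      add_zero] at h1
    rw [Real.exp_neg, inv_mul_le_iff₀ (Real.exp_pos _)] at h1
    have h2 : Real.exp (C * t) ≤ Real.exp (C * T) :=
      Real.exp_le_exp.2 (mul_le_mul_of_nonneg_left ht.2 hC)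
    have h3 := hE0 0 ⟨le_rfl, hT⟩
    have h4 : Real.exp (C * t) * (E 0 + q) ≤ Real.exp (C * T) * (E 0 + q) :=
      mul_le_mul_of_nonneg_right h2 (by linarith)
    simp only [hP]
    linarith
  constructor
  · intro t ht
    have h1 := hmain t ht
    have h2 := mul_nonneg hκ (hP0 t ht)
    linarith
  · have h1 := hmain T ⟨hT, le_rfl⟩
    have h2 := hE0 T ⟨hT, le_rfl⟩
    simp only [hP] at h1
    linarith

/-! ### Elementary inequalities -/

lemma young {l : ℝ} (hl : 0 < l) (s t : ℝ) : s * t ≤ l / 6 * t ^ 2 + 3 / (2 * l) * s ^ 2 := by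
  have h1 : 0 ≤ 3 / (2 * l) * (s - l / 3 * t) ^ 2 := by positivity
  have h2 : 3 / (2 * l) * (s - l / 3 * t) ^ 2
      = l / 6 * t ^ 2 + 3 / (2 * l) * s ^ 2 - s * t := by
    field_simp
    ring
  linarith

lemma abs_mul_abs_le (s t : ℝ) : |s| * |t| ≤ s ^ 2 + t ^ 2 := by
  rw [← sq_abs s, ← sq_abs t]
  nlinarith [sq_nonneg (|s| - |t|), sq_nonneg |s|, sq_nonneg |t|]

lemma inv_diff {h₀ h g : ℝ} (hh₀ : 0 < h₀) (hh : h₀ ≤ h) (hg : h₀ ≤ g) :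
    |1 / h - 1 / g| ≤ 1 / h₀ ^ 2 * |h - g| := by
  have h1 : 0 < h := hh₀.trans_le hh
  have h2 : 0 < g := hh₀.trans_le hg
  have h3 : 1 / h - 1 / g = -(1 / (h * g)) * (h - g) := by field_simp; ring
  rw [h3, abs_mul, abs_neg, abs_of_pos (by positivity)]
  refine mul_le_mul_of_nonneg_right ?_ (abs_nonneg _)
  refine one_div_le_one_div_of_le (by positivity) ?_
  nlinarith

lemma inv_sq_diff {h₀ h g : ℝ} (hh₀ : 0 < h₀) (hh : h₀ ≤ h) (hg : h₀ ≤ g) :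
    |1 / h ^ 2 - 1 / g ^ 2| ≤ 2 / h₀ ^ 3 * |h - g| := by
  have h1 : 0 < h := hh₀.trans_le hh
  have h2 : 0 < g := hh₀.trans_le hg
  have h3 : 1 / h ^ 2 - 1 / g ^ 2 = (1 / h + 1 / g) * (1 / h - 1 / g) := by ring
  have h4 : 1 / h ≤ 1 / h₀ := one_div_le_one_div_of_le hh₀ hh
  have h5 : 1 / g ≤ 1 / h₀ := one_div_le_one_div_of_le hh₀ hg
  rw [h3, abs_mul, abs_of_pos (by positivity)]
  refine (mul_le_mul (add_le_add h4 h5) (inv_diff hh₀ hh hg) (abs_nonneg _)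
    (by positivity)).trans_eq ?_
  field_simp
  ring

lemma ratio_diff {h₀ M₂ h g a e : ℝ} (hh₀ : 0 < h₀) (hh : h₀ ≤ h) (hg : h₀ ≤ g)
    (ha : |a| ≤ M₂) :
    |a / h - e / g| ≤ 1 / h₀ * |a - e| + M₂ / h₀ ^ 2 * |h - g| := by
  have h2 : 0 < g := hh₀.trans_le hg
  have h3 : a / h - e / g = 1 / g * (a - e) + a * (1 / h - 1 / g) := by ring
  rw [h3]
  refine (abs_add_le _ _).trans (add_le_add ?_ ?_)
  · rw [abs_mul, abs_of_pos (by positivity)]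
    exact mul_le_mul_of_nonneg_right (one_div_le_one_div_of_le hh₀ hg) (abs_nonneg _)
  · rw [abs_mul]
    refine (mul_le_mul ha (inv_diff hh₀ hh hg) (abs_nonneg _)
      ((abs_nonneg _).trans ha)).trans_eq ?_
    ring

lemma ratio_le {h₀ M₂ g e : ℝ} (hh₀ : 0 < h₀) (hg : h₀ ≤ g) (he : |e| ≤ M₂) :
    |e / g| ≤ M₂ / h₀ := by
  rw [abs_div, abs_of_pos (hh₀.trans_le hg)]
  exact div_le_div₀ ((abs_nonneg _).trans he) he hh₀ hg

set_option maxHeartbeats 1000000 in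
/-- Pointwise bound for the interior terms of the error equation, for the values `p` of `∂_y u`,
`r` of `∂_y ρ`, `t` of `θ` and `d` of `∂_y θ` at the point `x`. -/
lemma bulk_ineq {h₀ L M₂ P R W : ℝ} (hh₀ : 0 < h₀) (hL : h₀ ≤ L) (hM₂ : 0 ≤ M₂) (hP : 0 ≤ P)
    (hR : 0 ≤ R) (hW : 0 ≤ W) :
    ∃ C : ℝ, 0 ≤ C ∧ ∀ x h g a e p r k t d : ℝ, x ∈ Icc (0:ℝ) 1 → h₀ ≤ h → h₀ ≤ g → g ≤ L →
      |a| ≤ M₂ → |e| ≤ M₂ → |p| ≤ P → |r| ≤ R * k → 0 ≤ k →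
      x * (a / h * p - e / g * (p - r - d)) * t - (1 / h ^ 2 * p - 1 / g ^ 2 * (p - r - d)) * d
        + W * k * |d|
      ≤ -(1 / (2 * L ^ 2)) * d ^ 2 + C * (t ^ 2 + (h - g) ^ 2 + (a - e) ^ 2 + k ^ 2) := by
  have hL0 : 0 < L := hh₀.trans_le hL
  set l := 1 / L ^ 2 with hl
  have hl0 : 0 < l := by positivity
  set K1 := 1 / h₀ * P with hK1
  set K2 := M₂ / h₀ ^ 2 * P with hK2
  set K3 := M₂ / h₀ with hK3
  set K4 := 2 / h₀ ^ 3 * P with hK4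
  set K5 := 1 / h₀ ^ 2 * R + W with hK5
  have k1 : 0 ≤ K1 := by positivity
  have k2 : 0 ≤ K2 := by positivity
  have k3 : 0 ≤ K3 := by positivity
  have k4 : 0 ≤ K4 := by positivity
  have k5 : 0 ≤ K5 := by positivity
  refine ⟨K1 + K2 + K3 * R + 3 / (2 * l) * (K3 ^ 2 + K4 ^ 2 + K5 ^ 2), by positivity, ?_⟩
  intro x h g a e p r k t d hx hh hg hgL ha he hp hr hk
  have hg0 : 0 < g := hh₀.trans_le hg
  have hlg : l ≤ 1 / g ^ 2 := one_div_le_one_div_of_le (by positivity) (by gcongr)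
  have hlg' : 1 / g ^ 2 ≤ 1 / h₀ ^ 2 := one_div_le_one_div_of_le (by positivity) (by gcongr)
  have hω := ratio_diff (e := e) hh₀ hh hg ha
  have hμ := ratio_le hh₀ hg he
  have hν := inv_sq_diff hh₀ hh hg
  set ω := a / h - e / g with hωd
  set μ := e / g with hμd
  set ν := 1 / h ^ 2 - 1 / g ^ 2 with hνd
  have ex : x * (a / h * p - e / g * (p - r - d)) * t
      - (1 / h ^ 2 * p - 1 / g ^ 2 * (p - r - d)) * d + W * k * |d|
      = x * ω * p * t + x * μ * r * t + x * μ * d * t - ν * p * d - 1 / g ^ 2 * r * d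
        - 1 / g ^ 2 * d ^ 2 + W * k * |d| := by
    rw [hωd, hμd, hνd]; ring
  rw [ex]
  have hx' : |x| ≤ 1 := abs_le.2 ⟨by linarith [hx.1], hx.2⟩
  have b1 : x * ω * p * t ≤ (K1 * |a - e| + K2 * |h - g|) * |t| := by
    refine (le_abs_self _).trans ?_
    rw [abs_mul, abs_mul, abs_mul]
    refine mul_le_mul_of_nonneg_right ?_ (abs_nonneg _)
    calc |x| * |ω| * |p| ≤ 1 * (1 / h₀ * |a - e| + M₂ / h₀ ^ 2 * |h - g|) * P := by gcongr
      _ = _ := by rw [hK1, hK2]; ring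
  have b2 : x * μ * r * t ≤ K3 * R * k * |t| := by
    refine (le_abs_self _).trans ?_
    rw [abs_mul, abs_mul, abs_mul]
    refine mul_le_mul_of_nonneg_right ?_ (abs_nonneg _)
    calc |x| * |μ| * |r| ≤ 1 * K3 * (R * k) := by gcongr
      _ = _ := by ring
  have b3 : x * μ * d * t ≤ K3 * |t| * |d| := by
    refine (le_abs_self _).trans ?_
    rw [abs_mul, abs_mul, abs_mul]
    calc |x| * |μ| * |d| * |t| ≤ 1 * K3 * |d| * |t| := by gcongr
      _ = _ := by ring
  have b4 : -(ν * p * d) ≤ K4 * |h - g| * |d| := by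
    refine (neg_le_abs _).trans ?_
    rw [abs_mul, abs_mul]
    calc |ν| * |p| * |d| ≤ (2 / h₀ ^ 3 * |h - g|) * P * |d| := by gcongr
      _ = _ := by rw [hK4]; ring
  have b5 : -(1 / g ^ 2 * r * d) ≤ 1 / h₀ ^ 2 * R * k * |d| := by
    refine (neg_le_abs _).trans ?_
    rw [abs_mul, abs_mul, abs_of_pos (show 0 < 1 / g ^ 2 by positivity)]
    calc 1 / g ^ 2 * |r| * |d| ≤ 1 / h₀ ^ 2 * (R * k) * |d| := by gcongr
      _ = _ := by ring
  have b6 : l * d ^ 2 ≤ 1 / g ^ 2 * d ^ 2 := mul_le_mul_of_nonneg_right hlg (sq_nonneg _)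
  have y1 := young hl0 (K3 * |t|) |d|
  have y2 := young hl0 (K4 * |h - g|) |d|
  have y3 := young hl0 (K5 * k) |d|
  simp only [mul_pow, sq_abs] at y1 y2 y3
  have z1 := abs_mul_abs_le (a - e) t
  have z2 := abs_mul_abs_le (h - g) t
  have z3 := abs_mul_abs_le k t
  rw [abs_of_nonneg hk] at z3
  set S := t ^ 2 + (h - g) ^ 2 + (a - e) ^ 2 + k ^ 2 with hS
  have s1 := sq_nonneg t
  have s2 := sq_nonneg (h - g)
  have s3 := sq_nonneg (a - e)
  have s4 := sq_nonneg k
  have w1 := mul_le_mul_of_nonneg_left (show |a - e| * |t| ≤ S by linarith) k1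
  have w2 := mul_le_mul_of_nonneg_left (show |h - g| * |t| ≤ S by linarith) k2
  have w3 := mul_le_mul_of_nonneg_left (show k * |t| ≤ S by linarith) (mul_nonneg k3 hR)
  have c0 : 0 ≤ 3 / (2 * l) := by positivity
  have v1 := mul_le_mul_of_nonneg_left (show t ^ 2 ≤ S by linarith)
    (mul_nonneg c0 (sq_nonneg K3))
  have v2 := mul_le_mul_of_nonneg_left (show (h - g) ^ 2 ≤ S by linarith)
    (mul_nonneg c0 (sq_nonneg K4))
  have v3 := mul_le_mul_of_nonneg_left (show k ^ 2 ≤ S by linarith)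
    (mul_nonneg c0 (sq_nonneg K5))
  have hl2 : 1 / (2 * L ^ 2) = l / 2 := by rw [hl]; field_simp
  rw [hl2]
  have h5 : K5 * k * |d| = 1 / h₀ ^ 2 * R * k * |d| + W * k * |d| := by rw [hK5]; ring
  clear_value K1 K2 K3 K4 K5 ω μ ν S l
  clear ex hl2 hx hx' hω hμ hν hlg hlg' ha he hp hr
  linarith

set_option maxHeartbeats 1000000 in
/-- Bound for the boundary terms of the error equation, for the boundary values `v₀`, `v₁` of `u`,
`w₀`, `w₁` of `u_k` and `t₀`, `t₁` of `θ`. -/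
lemma boundary_ineq {Bi H h₀ M₁ M₂ bm R : ℝ} (hBi : 0 ≤ Bi) (hH : 0 ≤ H) (hh₀ : 0 < h₀)
    (hM₁ : 0 ≤ M₁) (hM₂ : 0 ≤ M₂) (hbm : 0 ≤ bm) (hR : 0 ≤ R) :
    ∃ C : ℝ, 0 ≤ C ∧ ∀ h g a e β v₀ w₀ t₀ v₁ w₁ t₁ k : ℝ, h₀ ≤ h → h₀ ≤ g →
      |a| ≤ M₂ → |e| ≤ M₂ → |β| ≤ bm → |v₀| ≤ M₁ → |v₁| ≤ M₁ → 0 ≤ k →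
      |v₀ - w₀ - t₀| ≤ R * k → |v₁ - w₁ - t₁| ≤ R * k →
      (Bi / h * (β - H * v₀) - Bi / g * (β - H * w₀)) * t₀
        - (a / h * v₁ - e / g * w₁) * t₁
      ≤ C * (t₀ ^ 2 + t₁ ^ 2 + (h - g) ^ 2 + (a - e) ^ 2 + k ^ 2) := by
  set K1 := 1 / h₀ ^ 2 * Bi * (bm + H * M₁) with hK1
  set K2 := Bi * H * R / h₀ with hK2
  set K3 := M₁ / h₀ with hK3
  set K4 := M₂ / h₀ ^ 2 * M₁ with hK4
  set K5 := M₂ / h₀ * R with hK5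
  set K6 := M₂ / h₀ with hK6
  have k1 : 0 ≤ K1 := by positivity
  have k2 : 0 ≤ K2 := by positivity
  have k3 : 0 ≤ K3 := by positivity
  have k4 : 0 ≤ K4 := by positivity
  have k5 : 0 ≤ K5 := by positivity
  have k6 : 0 ≤ K6 := by positivity
  refine ⟨K1 + K2 + K3 + K4 + K5 + K6, by positivity, ?_⟩
  intro h g a e β v₀ w₀ t₀ v₁ w₁ t₁ k hh hg ha he hβ hv₀ hv₁ hk hr₀ hr₁
  have hg0 : 0 < g := hh₀.trans_le hg
  have hω := ratio_diff (e := e) hh₀ hh hg ha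
  have hμ := ratio_le hh₀ hg he
  have hι := inv_diff hh₀ hh hg
  have hgi : 1 / g ≤ 1 / h₀ := one_div_le_one_div_of_le hh₀ hg
  set ω := a / h - e / g with hωd
  set μ := e / g with hμd
  set ι := 1 / h - 1 / g with hιd
  set r₀ := v₀ - w₀ - t₀ with hr₀d
  set r₁ := v₁ - w₁ - t₁ with hr₁d
  have ex : (Bi / h * (β - H * v₀) - Bi / g * (β - H * w₀)) * t₀
        - (a / h * v₁ - e / g * w₁) * t₁
      = ι * Bi * (β - H * v₀) * t₀ - 1 / g * Bi * H * r₀ * t₀ - 1 / g * Bi * H * t₀ ^ 2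
        - ω * v₁ * t₁ - μ * r₁ * t₁ - μ * t₁ ^ 2 := by
    rw [hωd, hμd, hιd, hr₀d, hr₁d]; ring
  rw [ex]
  have b1 : ι * Bi * (β - H * v₀) * t₀ ≤ K1 * (|h - g| * |t₀|) := by
    refine (le_abs_self _).trans ?_
    have h1 : |β - H * v₀| ≤ bm + H * M₁ := by
      refine (abs_sub _ _).trans (add_le_add hβ ?_)
      rw [abs_mul, abs_of_nonneg hH]
      gcongr
    rw [abs_mul, abs_mul, abs_mul, abs_of_nonneg hBi]
    calc |ι| * Bi * |β - H * v₀| * |t₀|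
        ≤ (1 / h₀ ^ 2 * |h - g|) * Bi * (bm + H * M₁) * |t₀| := by gcongr
      _ = _ := by rw [hK1]; ring
  have b2 : -(1 / g * Bi * H * r₀ * t₀) ≤ K2 * (k * |t₀|) := by
    refine (neg_le_abs _).trans ?_
    rw [abs_mul, abs_mul, abs_mul, abs_mul, abs_of_nonneg hBi, abs_of_nonneg hH,
      abs_of_pos (show 0 < 1 / g by positivity)]
    calc 1 / g * Bi * H * |r₀| * |t₀| ≤ 1 / h₀ * Bi * H * (R * k) * |t₀| := by gcongr
      _ = _ := by rw [hK2]; ring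
  have b3 : 0 ≤ 1 / g * Bi * H * t₀ ^ 2 := by positivity
  have b4 : -(ω * v₁ * t₁) ≤ K3 * (|a - e| * |t₁|) + K4 * (|h - g| * |t₁|) := by
    refine (neg_le_abs _).trans ?_
    rw [abs_mul, abs_mul]
    calc |ω| * |v₁| * |t₁| ≤ (1 / h₀ * |a - e| + M₂ / h₀ ^ 2 * |h - g|) * M₁ * |t₁| := by gcongr
      _ = _ := by rw [hK3, hK4]; ring
  have b5 : -(μ * r₁ * t₁) ≤ K5 * (k * |t₁|) := by
    refine (neg_le_abs _).trans ?_
    rw [abs_mul, abs_mul]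
    calc |μ| * |r₁| * |t₁| ≤ K6 * (R * k) * |t₁| := by gcongr
      _ = _ := by rw [hK5, hK6]; ring
  have b6 : -(μ * t₁ ^ 2) ≤ K6 * t₁ ^ 2 := by
    rw [← neg_mul]
    exact mul_le_mul_of_nonneg_right ((neg_le_abs _).trans hμ) (sq_nonneg _)
  set S := t₀ ^ 2 + t₁ ^ 2 + (h - g) ^ 2 + (a - e) ^ 2 + k ^ 2 with hS
  have s0 := sq_nonneg t₀
  have s1 := sq_nonneg t₁
  have s2 := sq_nonneg (h - g)
  have s3 := sq_nonneg (a - e)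
  have s4 := sq_nonneg k
  have a1 := abs_mul_abs_le (h - g) t₀
  have a2 := abs_mul_abs_le k t₀
  have a3 := abs_mul_abs_le (a - e) t₁
  have a4 := abs_mul_abs_le (h - g) t₁
  have a5 := abs_mul_abs_le k t₁
  rw [abs_of_nonneg hk] at a2 a5
  have w1 := mul_le_mul_of_nonneg_left (show |h - g| * |t₀| ≤ S by linarith) k1
  have w2 := mul_le_mul_of_nonneg_left (show k * |t₀| ≤ S by linarith) k2
  have w3 := mul_le_mul_of_nonneg_left (show |a - e| * |t₁| ≤ S by linarith) k3
  have w4 := mul_le_mul_of_nonneg_left (show |h - g| * |t₁| ≤ S by linarith) k4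
  have w5 := mul_le_mul_of_nonneg_left (show k * |t₁| ≤ S by linarith) k5
  have w6 := mul_le_mul_of_nonneg_left (show t₁ ^ 2 ≤ S by linarith) k6
  clear_value K1 K2 K3 K4 K5 K6 ω μ ι S r₀ r₁
  clear ex hω hμ hι ha he hβ hv₀ hv₁ hr₀ hr₁
  linarith

/-- The kinetic law bounds the error of the boundary speed. -/
lemma kinetic_ineq {A₀ m₀ l R : ℝ} (hA₀ : 0 < A₀) (hm₀ : 0 < m₀) {σ : ℝ → ℝ}
    (hσ : ∀ x y : ℝ, |σ x - σ y| ≤ l * |x - y|) :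
    ∃ C : ℝ, 0 ≤ C ∧ ∀ h g a e v w t k : ℝ, a = A₀ * (v - σ h / m₀) → e = A₀ * (w - σ g / m₀) →
      |v - w - t| ≤ R * k → (a - e) ^ 2 ≤ C * (t ^ 2 + (h - g) ^ 2 + k ^ 2) := by
  refine ⟨3 * A₀ ^ 2 * (1 + R ^ 2 + (l / m₀) ^ 2), by positivity, ?_⟩
  intro h g a e v w t k ha he hr
  have h1 : a - e = A₀ * ((v - w - t) + t - (σ h - σ g) / m₀) := by rw [ha, he]; ring
  have h2 : (v - w - t) ^ 2 ≤ R ^ 2 * k ^ 2 := by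
    rw [← mul_pow, ← sq_abs]
    gcongr
  have h3 : ((σ h - σ g) / m₀) ^ 2 ≤ (l / m₀) ^ 2 * (h - g) ^ 2 := by
    have : |σ h - σ g| ^ 2 ≤ (l * |h - g|) ^ 2 := by gcongr; exact hσ h g
    rw [sq_abs, mul_pow, sq_abs] at this
    rw [div_pow, div_pow, div_mul_eq_mul_div]
    gcongr
  rw [h1, mul_pow]
  have h4 : ((v - w - t) + t - (σ h - σ g) / m₀) ^ 2
      ≤ 3 * ((v - w - t) ^ 2 + t ^ 2 + ((σ h - σ g) / m₀) ^ 2) := by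
    set p := v - w - t
    set q := (σ h - σ g) / m₀
    nlinarith [sq_nonneg (p - t), sq_nonneg (p + q), sq_nonneg (t + q)]
  have h5 : (v - w - t) ^ 2 + t ^ 2 + ((σ h - σ g) / m₀) ^ 2
      ≤ (1 + R ^ 2 + (l / m₀) ^ 2) * (t ^ 2 + (h - g) ^ 2 + k ^ 2) := by
    have := sq_nonneg R
    have := sq_nonneg (l / m₀)
    have := sq_nonneg t
    have := sq_nonneg k
    have := sq_nonneg (h - g)
    nlinarith [mul_nonneg (sq_nonneg R) (sq_nonneg t), mul_nonneg (sq_nonneg R) (sq_nonneg (h-g)),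
      mul_nonneg (sq_nonneg (l / m₀)) (sq_nonneg t), mul_nonneg (sq_nonneg (l / m₀)) (sq_nonneg k)]
  calc A₀ ^ 2 * ((v - w - t) + t - (σ h - σ g) / m₀) ^ 2
      ≤ A₀ ^ 2 * (3 * ((1 + R ^ 2 + (l / m₀) ^ 2) * (t ^ 2 + (h - g) ^ 2 + k ^ 2))) := by
        gcongr
        exact h4.trans (by gcongr)
    _ = _ := by ring

/-! ### The energy inequality -/

/-- The weak form of the transformed system at a fixed time, tested with a finite element
function. -/
lemma weak_form (hM : Mesh n y k) (c : ℕ → ℝ) {f f' f'' ft : ℝ → ℝ} {h a Bi β H : ℝ} (hh : 0 < h)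
    (hf' : ∀ x ∈ Icc (0:ℝ) 1, HasDerivWithinAt f' (f'' x) (Icc 0 1) x)
    (hf'' : BM f'')
    (hpde : ∀ x ∈ Icc (0:ℝ) 1, ft x - x * (a / h) * f' x - 1 / h ^ 2 * f'' x = 0)
    (h0 : -(1 / h) * f' 0 = Bi * (β - H * f 0)) (h1 : -(1 / h) * f' 1 = a * f 1) :
    (∫ x in (0:ℝ)..1, ft x * pl n y c x) - a / h * (∫ x in (0:ℝ)..1, x * f' x * pl n y c x)
      + 1 / h ^ 2 * (∫ x in (0:ℝ)..1, f' x * plD n y c x)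
      - Bi / h * (β - H * f 0) * pl n y c 0 + a / h * f 1 * pl n y c 1 = 0 := by
  have hb := pl_bm n y c
  have hb' := plD_bm n y c
  have hid : BM (fun x => x) := BM.of_continuous continuous_id
  have hfc : ContinuousOn f' (Icc 0 1) := fun x hx => (hf' x hx).continuousWithinAt
  have hfb : BM f' := BM.of_continuousOn hfc
  have hI := ftc_off (y := y) (f := fun x => f' x * pl n y c x)
    (f' := fun x => f'' x * pl n y c x + f' x * plD n y c x)
    (hfc.mul (pl_continuous n y c).continuousOn) ((hf''.mul hb).add (hfb.mul hb'))
    (fun x hx hxy => ((hf' x (Ioo_subset_Icc_self hx)).hasDerivAt (Icc_mem_nhds hx.1 hx.2)).mul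
      (pl_hasDerivAt hM c (Ioo_subset_Icc_self hx) hxy)) le_rfl zero_le_one le_rfl
  rw [intervalIntegral.integral_add (hf''.mul hb).ii (hfb.mul hb').ii] at hI
  have hft : ∫ x in (0:ℝ)..1, ft x * pl n y c x
      = a / h * (∫ x in (0:ℝ)..1, x * f' x * pl n y c x)
        + 1 / h ^ 2 * ∫ x in (0:ℝ)..1, f'' x * pl n y c x := by
    rw [← intervalIntegral.integral_const_mul, ← intervalIntegral.integral_const_mul,
      ← intervalIntegral.integral_add (((hid.mul hfb).mul hb).const_mul _).ii
        ((hf''.mul hb).const_mul _).ii]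
    refine integral_congr_off (y := y) fun x hx _ => ?_
    have : ft x = x * (a / h) * f' x + 1 / h ^ 2 * f'' x := by linarith [hpde x hx]
    rw [this]; ring
  have e0 : f' 0 = -(h * (Bi * (β - H * f 0))) := by rw [← h0]; field_simp
  have e1 : f' 1 = -(h * (a * f 1)) := by rw [← h1]; field_simp
  rw [e0, e1] at hI
  have hI2 : ∫ x in (0:ℝ)..1, f'' x * pl n y c x = -(h * (a * f 1)) * pl n y c 1
      + h * (Bi * (β - H * f 0)) * pl n y c 0 - ∫ x in (0:ℝ)..1, f' x * plD n y c x := by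
    linarith
  rw [hft, hI2]
  field_simp
  ring

set_option maxHeartbeats 1000000 in
/-- The energy inequality for `θ = Q u - u_k` and `δ = h - h_k` at a fixed time. Here `f`, `ft` are
`u`, `∂_τ u` at that time, `U`, `Ut` are the nodal values of `u_k`, `∂_τ u_k`, and `h, a, g, e`
stand for `h, h', h_k, h_k'`. -/
lemma energy_step {Bi H h₀ L M₁ M₂ bm P B G A₀ m₀ l : ℝ} (hBi : 0 ≤ Bi) (hH : 0 ≤ H)
    (hh₀ : 0 < h₀) (hL : h₀ ≤ L) (hM₁ : 0 ≤ M₁) (hM₂ : 0 ≤ M₂) (hbm : 0 ≤ bm) (hP : 0 ≤ P)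
    (hB : 0 ≤ B) (hG : 0 ≤ G) (hA₀ : 0 < A₀) (hm₀ : 0 < m₀) {σ : ℝ → ℝ}
    (hσ : ∀ x y : ℝ, |σ x - σ y| ≤ l * |x - y|) :
    ∃ κ C : ℝ, 0 < κ ∧ 0 ≤ C ∧ ∀ (n : ℕ) (y : ℕ → ℝ) (k : ℝ) (M : ℕ) (U Ut : ℕ → ℝ)
      (f f' f'' ft : ℝ → ℝ) (h a g e β : ℝ), Mesh n y k → k ≤ 1 → 1 ≤ M → (M:ℝ) * k ≤ 1 →
      1 / (M:ℝ) ≤ 2 * k →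
      (∀ x ∈ Icc (0:ℝ) 1, HasDerivWithinAt f (f' x) (Icc 0 1) x) →
      (∀ x ∈ Icc (0:ℝ) 1, HasDerivWithinAt f' (f'' x) (Icc 0 1) x) →
      BM f'' → BM ft →
      (∀ x ∈ Icc (0:ℝ) 1, |f x| ≤ M₁) → (∀ x ∈ Icc (0:ℝ) 1, |f' x| ≤ P) →
      (∀ x ∈ Icc (0:ℝ) 1, |f'' x| ≤ B) → (∀ x ∈ Icc (0:ℝ) 1, |ft x| ≤ G) →
      (∀ x ∈ Icc (0:ℝ) 1, ft x - x * (a / h) * f' x - 1 / h ^ 2 * f'' x = 0) →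
      -(1 / h) * f' 0 = Bi * (β - H * f 0) → -(1 / h) * f' 1 = a * f 1 →
      h₀ ≤ h → h₀ ≤ g → g ≤ L → |a| ≤ M₂ → |e| ≤ M₂ → |β| ≤ bm →
      a = A₀ * (f 1 - σ h / m₀) → e = A₀ * (pl n y U 1 - σ g / m₀) →
      ((∫ x in (0:ℝ)..1, pl n y Ut x * pl n y (fun i => quasi n y M f i - U i) x)
        - e / g * (∫ x in (0:ℝ)..1, x * plD n y U x * pl n y (fun i => quasi n y M f i - U i) x)
        + 1 / g ^ 2 *
          (∫ x in (0:ℝ)..1, plD n y U x * plD n y (fun i => quasi n y M f i - U i) x)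
        - Bi / g * (β - H * pl n y U 0) * pl n y (fun i => quasi n y M f i - U i) 0
        + e / g * pl n y U 1 * pl n y (fun i => quasi n y M f i - U i) 1 = 0) →
      (∫ x in (0:ℝ)..1, pl n y (fun i => quasi n y M ft i - Ut i) x
          * pl n y (fun i => quasi n y M f i - U i) x) + (h - g) * (a - e)
        ≤ -κ * (∫ x in (0:ℝ)..1, plD n y (fun i => quasi n y M f i - U i) x ^ 2)
          + C * ((∫ x in (0:ℝ)..1, pl n y (fun i => quasi n y M f i - U i) x ^ 2)
            + (h - g) ^ 2 + k ^ 2) := by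
  have hL0 : 0 < L := hh₀.trans_le hL
  obtain ⟨C1, hC1, hbulk⟩ := bulk_ineq hh₀ hL hM₂ hP (R := 3 * B) (W := 128 * G)
    (by positivity) (by positivity)
  obtain ⟨C2, hC2, hbd⟩ := boundary_ineq hBi hH hh₀ hM₁ hM₂ hbm (R := 3 * B) (by positivity)
  obtain ⟨C3, hC3, hkin⟩ := kinetic_ineq hA₀ hm₀ (R := 3 * B) hσ
  set κ := 1 / (4 * L ^ 2) with hκ
  have hκ0 : 0 < κ := by positivity
  -- the coefficient of the squared traces after all other terms have been estimated
  set C4 := C2 + (C1 + C2 + 1) * C3 with hC4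
  have hC40 : 0 ≤ C4 := by positivity
  set ε := κ / (2 * (C4 + 1)) with hε
  have hε0 : 0 < ε := by positivity
  refine ⟨κ, (C1 + C2 + 1 + C4) + 2 * C4 * (1 + 1 / ε), hκ0, by positivity, ?_⟩
  intro n y k M U Ut f f' f'' ft h a g e β hM hk1 hM1 hMk hMk' hf hf' hf'' hft hfb hf'b hf''b
    hftb hpde h0 h1 hh hg hgL ha he hβ hka hke hgal
  have hk0 := hM.k_pos
  set c : ℕ → ℝ := fun i => quasi n y M f i - U i with hc
  set c' : ℕ → ℝ := fun i => quasi n y M ft i - Ut i with hc'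
  obtain ⟨q1, q2, -⟩ := quasi_bounds hM hMk hk1 hf hf' hf''b
  have hweak := weak_form hM c (hh₀.trans_le hh) hf' hf'' hpde h0 h1
  have hθ := pl_bm n y c
  have hθ' := plD_bm n y c
  have hid : BM (fun x => x) := BM.of_continuous continuous_id
  have hf'bm : BM f' := BM.of_continuousOn fun x hx => (hf' x hx).continuousWithinAt
  have hUD := plD_bm n y U
  -- consistency error of the time derivative
  have hdual : |∫ x in (0:ℝ)..1, (ft x - pl n y (quasi n y M ft) x) * pl n y c x|
      ≤ 128 * G * k * ∫ x in (0:ℝ)..1, |plD n y c x| := by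
    simp only [sub_quasi]
    refine (smooth_dual hM hM1 hMk (interpErr_bm hft) (G := G + G) (by positivity)
      (fun x hx => (abs_sub _ _).trans (add_le_add (hftb x hx)
        (pl_abs_le hM (fun i hi => hftb _ (hM.mem hi)) hx))) c).trans ?_
    refine mul_le_mul_of_nonneg_right ?_ (intervalIntegral.integral_nonneg zero_le_one
      fun x _ => abs_nonneg _)
    have : 32 / (M:ℝ) = 32 * (1 / M) := by ring
    rw [this]
    nlinarith only [mul_le_mul_of_nonneg_right hMk' hG]
  have hsplit : ∫ x in (0:ℝ)..1, pl n y c' x * pl n y c x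
      = (∫ x in (0:ℝ)..1, ft x * pl n y c x) - (∫ x in (0:ℝ)..1, pl n y Ut x * pl n y c x)
        - ∫ x in (0:ℝ)..1, (ft x - pl n y (quasi n y M ft) x) * pl n y c x := by
    rw [← intervalIntegral.integral_sub (hft.mul hθ).ii ((pl_bm _ _ _).mul hθ).ii,
      ← intervalIntegral.integral_sub ((hft.mul hθ).sub ((pl_bm _ _ _).mul hθ)).ii
        ((hft.sub (pl_bm _ _ _)).mul hθ).ii]
    congr 1
    funext x
    rw [hc', pl_sub]
    ring
  -- the interior terms, as a single integral
  have hI : a / h * (∫ x in (0:ℝ)..1, x * f' x * pl n y c x)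
      - e / g * (∫ x in (0:ℝ)..1, x * plD n y U x * pl n y c x)
      - (1 / h ^ 2 * (∫ x in (0:ℝ)..1, f' x * plD n y c x)
        - 1 / g ^ 2 * ∫ x in (0:ℝ)..1, plD n y U x * plD n y c x)
      + 128 * G * k * (∫ x in (0:ℝ)..1, |plD n y c x|)
      ≤ -(1 / (2 * L ^ 2)) * (∫ x in (0:ℝ)..1, plD n y c x ^ 2)
        + C1 * ((∫ x in (0:ℝ)..1, pl n y c x ^ 2) + ((h - g) ^ 2 + (a - e) ^ 2 + k ^ 2)) := by
    have i1 := ((hid.mul hf'bm).mul hθ).const_mul (a / h)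
    have i2 := ((hid.mul hUD).mul hθ).const_mul (e / g)
    have i3 := (hf'bm.mul hθ').const_mul (1 / h ^ 2)
    have i4 := (hUD.mul hθ').const_mul (1 / g ^ 2)
    have i5 := hθ'.abs.const_mul (128 * G * k)
    have i6 := hθ'.sq.const_mul (-(1 / (2 * L ^ 2)))
    have i7 := hθ.sq
    have i8 := BM.const ((h - g) ^ 2 + (a - e) ^ 2 + k ^ 2)
    have e8 : (h - g) ^ 2 + (a - e) ^ 2 + k ^ 2
        = ∫ x in (0:ℝ)..1, ((h - g) ^ 2 + (a - e) ^ 2 + k ^ 2) := by simp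
    rw [e8]
    simp only [← intervalIntegral.integral_const_mul]
    rw [← intervalIntegral.integral_sub i1.ii i2.ii, ← intervalIntegral.integral_sub i3.ii i4.ii,
      ← intervalIntegral.integral_sub (i1.sub i2).ii (i3.sub i4).ii,
      ← intervalIntegral.integral_add ((i1.sub i2).sub (i3.sub i4)).ii i5.ii,
      ← intervalIntegral.integral_add i7.ii i8.ii, ← intervalIntegral.integral_const_mul,
      ← intervalIntegral.integral_add i6.ii ((i7.add i8).const_mul _).ii]
    refine integral_le_off (y := y) (((i1.sub i2).sub (i3.sub i4)).add i5)
      (i6.add ((i7.add i8).const_mul _)) fun x hx hxy => ?_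
    have hUx : plD n y U x = f' x - (f' x - plD n y (quasi n y M f) x) - plD n y c x := by
      rw [hc, plD_sub]; ring
    have := hbulk x h g a e (f' x) (f' x - plD n y (quasi n y M f) x) k (pl n y c x)
      (plD n y c x) hx hh hg hgL ha he (hf'b x hx) (q2 x hx hxy) hk0.le
    rw [← hUx] at this
    linarith
  have m0 : (0:ℝ) ∈ Icc (0:ℝ) 1 := ⟨le_rfl, zero_le_one⟩
  have m1 : (1:ℝ) ∈ Icc (0:ℝ) 1 := ⟨zero_le_one, le_rfl⟩
  have hr : ∀ x ∈ Icc (0:ℝ) 1, |f x - pl n y U x - pl n y c x| ≤ 3 * B * k := by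
    intro x hx
    have : f x - pl n y U x - pl n y c x = f x - pl n y (quasi n y M f) x := by
      rw [hc, pl_sub]; ring
    rw [this]; exact q1 x hx
  have hbd' := hbd h g a e β (f 0) (pl n y U 0) (pl n y c 0) (f 1) (pl n y U 1) (pl n y c 1) k
    hh hg ha he hβ (hfb 0 m0) (hfb 1 m1) hk0.le (hr 0 m0) (hr 1 m1)
  have hkin' := hkin h g a e (f 1) (pl n y U 1) (pl n y c 1) k hka hke (hr 1 m1)
  have t0 := trace_zero hM c hε0
  have t1 := trace_one hM c hε0
  set D := ∫ x in (0:ℝ)..1, plD n y c x ^ 2 with hD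
  set Q := ∫ x in (0:ℝ)..1, pl n y c x ^ 2 with hQ
  have hD0 : 0 ≤ D := intervalIntegral.integral_nonneg zero_le_one fun x _ => sq_nonneg _
  have hQ0 : 0 ≤ Q := intervalIntegral.integral_nonneg zero_le_one fun x _ => sq_nonneg _
  have hdual' := neg_le_of_abs_le hdual
  have hδ : (h - g) * (a - e) ≤ (h - g) ^ 2 + (a - e) ^ 2 := by
    nlinarith [sq_nonneg (h - g - (a - e)), sq_nonneg (h - g), sq_nonneg (a - e)]
  have hL2 : 1 / (2 * L ^ 2) = 2 * κ := by rw [hκ]; field_simp; norm_num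
  rw [hL2] at hI
  have step1 : (∫ x in (0:ℝ)..1, pl n y c' x * pl n y c x) + (h - g) * (a - e)
      ≤ -(2 * κ) * D + C1 * (Q + ((h - g) ^ 2 + (a - e) ^ 2 + k ^ 2))
        + C2 * (pl n y c 0 ^ 2 + pl n y c 1 ^ 2 + (h - g) ^ 2 + (a - e) ^ 2 + k ^ 2)
        + ((h - g) ^ 2 + (a - e) ^ 2) := by
    rw [hsplit]
    linarith only [hweak, hgal, hdual', hI, hbd', hδ]
  refine step1.trans ?_
  have hεC : 2 * C4 * ε ≤ κ := by
    have : ε * (2 * (C4 + 1)) = κ := by rw [hε]; field_simp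
    linarith only [this, hε0]
  have u1 := mul_le_mul_of_nonneg_left hkin' (show 0 ≤ C1 + C2 + 1 by positivity)
  have u2 := mul_le_mul_of_nonneg_left t0 hC40
  have u3 := mul_le_mul_of_nonneg_left t1 hC40
  have u4 := mul_le_mul_of_nonneg_right hεC hD0
  have u5 : 0 ≤ (C1 + C2 + 1) * C3 * pl n y c 0 ^ 2 := by positivity
  have u6 : 0 ≤ 2 * C4 * (1 + 1 / ε) * ((h - g) ^ 2 + k ^ 2) := by positivity
  have u7 : 0 ≤ (C2 + 1 + C4) * Q := by positivity
  have u8 : 0 ≤ C2 * (h - g) ^ 2 + C2 * k ^ 2 + k ^ 2 := by positivity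
  rw [hC4] at u2 u3 u4 u6 u7 ⊢
  linarith only [u1, u2, u3, u4, u5, u6, u7, u8]

/-! ### The error estimate -/

lemma slice_bm {T : ℝ} {v : ℝ → ℝ → ℝ}
    (hv : ContinuousOn (fun q : ℝ × ℝ => v q.1 q.2) (Icc 0 T ×ˢ Icc 0 1)) {τ : ℝ}
    (hτ : τ ∈ Icc (0:ℝ) T) : BM (v τ) :=
  BM.of_continuousOn (hv.comp (f := fun x : ℝ => (τ, x)) (by fun_prop) fun _ hx => ⟨hτ, hx⟩)

lemma exists_bound {T : ℝ} (hT : 0 ≤ T) {v : ℝ → ℝ → ℝ}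
    (hv : ContinuousOn (fun q : ℝ × ℝ => v q.1 q.2) (Icc 0 T ×ˢ Icc 0 1)) :
    ∃ P : ℝ, 0 ≤ P ∧ ∀ τ ∈ Icc (0:ℝ) T, ∀ x ∈ Icc (0:ℝ) 1, |v τ x| ≤ P := by
  obtain ⟨P, hP⟩ := (isCompact_Icc.prod isCompact_Icc).exists_bound_of_continuousOn hv
  have h : ∀ τ ∈ Icc (0:ℝ) T, ∀ x ∈ Icc (0:ℝ) 1, |v τ x| ≤ P := fun τ hτ x hx =>
    hP (τ, x) ⟨hτ, hx⟩
  exact ⟨P, (abs_nonneg _).trans (h 0 ⟨le_rfl, hT⟩ 0 ⟨le_rfl, zero_le_one⟩), h⟩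

/-- Rewriting of the Galerkin relation in terms of the nodal values of `u_k` and `∂_τ u_k`. -/
lemma galerkin_nodal (hM : Mesh n y k) {f ft : ℝ → ℝ} {U Ut c : ℕ → ℝ} {a₁ a₂ a₃ a₄ β H : ℝ}
    (hf : ∀ x ∈ Icc (0:ℝ) 1, f x = pl n y U x) (hft : ∀ x ∈ Icc (0:ℝ) 1, ft x = pl n y Ut x)
    (hgal : (∫ x in (0:ℝ)..1, ft x * pl n y c x)
      - a₁ * (∫ x in (0:ℝ)..1, x * deriv f x * pl n y c x)
      + a₂ * (∫ x in (0:ℝ)..1, deriv f x * deriv (pl n y c) x)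
      - a₃ * (β - H * f 0) * pl n y c 0 + a₄ * f 1 * pl n y c 1 = 0) :
    (∫ x in (0:ℝ)..1, pl n y Ut x * pl n y c x)
      - a₁ * (∫ x in (0:ℝ)..1, x * plD n y U x * pl n y c x)
      + a₂ * (∫ x in (0:ℝ)..1, plD n y U x * plD n y c x)
      - a₃ * (β - H * pl n y U 0) * pl n y c 0 + a₄ * pl n y U 1 * pl n y c 1 = 0 := by
  have hd : ∀ x ∈ Icc (0:ℝ) 1, x ∉ range y → deriv f x = plD n y U x := fun x hx hxy =>
    (hasDerivAt_of_eq_pl hM U hf hx hxy).deriv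
  have e1 : ∫ x in (0:ℝ)..1, ft x * pl n y c x = ∫ x in (0:ℝ)..1, pl n y Ut x * pl n y c x :=
    integral_congr_off (y := y) fun x hx _ => by rw [hft x hx]
  have e2 : ∫ x in (0:ℝ)..1, x * deriv f x * pl n y c x
      = ∫ x in (0:ℝ)..1, x * plD n y U x * pl n y c x :=
    integral_congr_off (y := y) fun x hx hxy => by rw [hd x hx hxy]
  have e3 : ∫ x in (0:ℝ)..1, deriv f x * deriv (pl n y c) x
      = ∫ x in (0:ℝ)..1, plD n y U x * plD n y c x :=
    integral_congr_off (y := y) fun x hx hxy => by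
      rw [hd x hx hxy, (pl_hasDerivAt hM c hx hxy).deriv]
  rwa [e1, e2, e3, hf 0 ⟨le_rfl, zero_le_one⟩, hf 1 ⟨zero_le_one, le_rfl⟩] at hgal

/-- The time derivative of a finite element function is determined by that of its nodal values. -/
lemma time_deriv_nodal (hM : Mesh n y k) {T : ℝ} {v vt : ℝ → ℝ → ℝ}
    (hv : ∀ τ ∈ Icc (0:ℝ) T, ∀ x ∈ Icc (0:ℝ) 1, v τ x = pl n y (fun i => v τ (y i)) x)
    (hd : ∀ x ∈ Icc (0:ℝ) 1, ∀ τ ∈ Icc (0:ℝ) T, HasDerivAt (fun s => v s x) (vt τ x) τ)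
    {τ : ℝ} (hτ : τ ∈ Ioo (0:ℝ) T) {x : ℝ} (hx : x ∈ Icc (0:ℝ) 1) :
    vt τ x = pl n y (fun i => vt τ (y i)) x := by
  have hτ' := Ioo_subset_Icc_self hτ
  have h1 := hd x hx τ hτ'
  have h2 : HasDerivAt (fun s => pl n y (fun i => v s (y i)) x)
      (pl n y (fun i => vt τ (y i)) x) τ :=
    pl_time_deriv n y (fun i hi => hd (y i) (hM.mem hi) τ hτ') x
  refine h1.unique (h2.congr_of_eventuallyEq ?_)
  filter_upwards [Icc_mem_nhds hτ.1 hτ.2] with s hs using hv s hs x hx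

lemma time_integral_mono {T : ℝ} (hT : 0 ≤ T) {f g : ℝ → ℝ} (hg : ContinuousOn g (Icc 0 T))
    (h0 : ∀ t, 0 ≤ f t) (h : ∀ t ∈ Icc (0:ℝ) T, f t ≤ g t) :
    ∫ t in (0:ℝ)..T, f t ≤ ∫ t in (0:ℝ)..T, g t := by
  rw [intervalIntegral.integral_of_le hT, intervalIntegral.integral_of_le hT]
  refine integral_mono_of_nonneg (Filter.Eventually.of_forall h0)
    (hg.integrableOn_Icc.mono_set Ioc_subset_Icc_self) ?_
  exact (ae_restrict_iff' measurableSet_Ioc).2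
    (Filter.Eventually.of_forall fun t ht => h t (Ioc_subset_Icc_self ht))

/-- Passage from the Grönwall bounds for `θ` and `δ` to the error estimate. -/
lemma final_bounds (hM : Mesh n y k) {T κ K R Ck τ : ℝ} (hT : 0 < T) (hκ : 0 < κ)
    (hCk : 0 ≤ Ck)
    {u uy uk : ℝ → ℝ → ℝ} {h h' hk hk' : ℝ → ℝ} {c : ℝ → ℕ → ℝ}
    (huk : ∀ t ∈ Icc (0:ℝ) T, ∀ x ∈ Icc (0:ℝ) 1, |u t x - uk t x - pl n y (c t) x| ≤ R * k)
    (huy : ∀ t ∈ Icc (0:ℝ) T, ∀ x ∈ Icc (0:ℝ) 1, x ∉ range y →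
      |uy t x - deriv (uk t) x - plD n y (c t) x| ≤ R * k)
    (hkin : ∀ t ∈ Icc (0:ℝ) T,
      (h' t - hk' t) ^ 2 ≤ Ck * (pl n y (c t) 1 ^ 2 + (h t - hk t) ^ 2 + k ^ 2))
    (hDc : ContinuousOn (fun t => ∫ x in (0:ℝ)..1, plD n y (c t) x ^ 2) (Icc 0 T))
    (hE : ∀ t ∈ Icc (0:ℝ) T,
      1 / 2 * (∫ x in (0:ℝ)..1, pl n y (c t) x ^ 2) + 1 / 2 * (h t - hk t) ^ 2 ≤ K * k ^ 2)
    (hD : κ * (∫ t in (0:ℝ)..T, ∫ x in (0:ℝ)..1, plD n y (c t) x ^ 2) ≤ K * k ^ 2)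
    (hτ : τ ∈ Icc (0:ℝ) T) :
    (∫ x in (0:ℝ)..1, (u τ x - uk τ x) ^ 2)
      + (∫ s in (0:ℝ)..T, ∫ x in (0:ℝ)..1, (uy s x - deriv (uk s) x) ^ 2)
      + (h τ - hk τ) ^ 2 + (∫ s in (0:ℝ)..T, (h' s - hk' s) ^ 2)
    ≤ ((2 * R ^ 2 + 4 * K) + (2 * R ^ 2 * T + 2 * (K / κ)) + 2 * K
        + Ck * (K / κ + T * (6 * K + 1))) * k ^ 2 := by
  have hsq : ∀ p q : ℝ, |p - q| ≤ R * k → p ^ 2 ≤ 2 * R ^ 2 * k ^ 2 + 2 * q ^ 2 := by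
    intro p q hpq
    have h1 : (p - q) ^ 2 ≤ (R * k) ^ 2 := by
      rw [← sq_abs]
      gcongr
    nlinarith [sq_nonneg (p - 2 * q)]
  have hQ0 : ∀ t, 0 ≤ ∫ x in (0:ℝ)..1, pl n y (c t) x ^ 2 := fun t =>
    intervalIntegral.integral_nonneg zero_le_one fun x _ => sq_nonneg _
  have hD' : ∫ t in (0:ℝ)..T, ∫ x in (0:ℝ)..1, plD n y (c t) x ^ 2 ≤ K / κ * k ^ 2 := by
    rw [div_mul_eq_mul_div, le_div_iff₀ hκ]
    linarith
  have hDi : IntervalIntegrable (fun t => ∫ x in (0:ℝ)..1, plD n y (c t) x ^ 2) volume 0 T := by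
    refine ContinuousOn.intervalIntegrable ?_
    rwa [uIcc_of_le hT.le]
  have b1 : ∫ x in (0:ℝ)..1, (u τ x - uk τ x) ^ 2 ≤ (2 * R ^ 2 + 4 * K) * k ^ 2 := by
    have := integral_le_off' (y := y) (f := fun x => (u τ x - uk τ x) ^ 2)
      (g := fun x => 2 * R ^ 2 * k ^ 2 + 2 * pl n y (c τ) x ^ 2)
      ((BM.const _).add ((pl_bm _ _ _).sq.const_mul _)) (fun x => sq_nonneg _)
      (fun x hx _ => hsq _ _ (huk τ hτ x hx))
    rw [intervalIntegral.integral_add (BM.const _).ii ((pl_bm _ _ _).sq.const_mul _).ii,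
      intervalIntegral.integral_const_mul (2:ℝ)] at this
    simp only [intervalIntegral.integral_const, sub_zero, one_smul] at this
    have h2 := hE τ hτ
    have h3 := sq_nonneg (h τ - hk τ)
    linarith
  have b2 : (∫ s in (0:ℝ)..T, ∫ x in (0:ℝ)..1, (uy s x - deriv (uk s) x) ^ 2)
      ≤ (2 * R ^ 2 * T + 2 * (K / κ)) * k ^ 2 := by
    have := time_integral_mono hT.le
      (f := fun s => ∫ x in (0:ℝ)..1, (uy s x - deriv (uk s) x) ^ 2)
      (g := fun s => 2 * R ^ 2 * k ^ 2 + 2 * ∫ x in (0:ℝ)..1, plD n y (c s) x ^ 2)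
      (continuousOn_const.add (continuousOn_const.mul hDc))
      (fun s => intervalIntegral.integral_nonneg zero_le_one fun x _ => sq_nonneg _)
      (fun s hs => by
        have := integral_le_off' (y := y) (f := fun x => (uy s x - deriv (uk s) x) ^ 2)
          (g := fun x => 2 * R ^ 2 * k ^ 2 + 2 * plD n y (c s) x ^ 2)
          ((BM.const _).add ((plD_bm _ _ _).sq.const_mul _)) (fun x => sq_nonneg _)
          (fun x hx hxy => hsq _ _ (huy s hs x hx hxy))
        rw [intervalIntegral.integral_add (BM.const _).ii ((plD_bm _ _ _).sq.const_mul _).ii,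
          intervalIntegral.integral_const_mul (2:ℝ)] at this
        simpa only [intervalIntegral.integral_const, sub_zero, one_smul] using this)
    rw [intervalIntegral.integral_add intervalIntegrable_const (hDi.const_mul 2),
      intervalIntegral.integral_const_mul (2:ℝ)] at this
    simp only [intervalIntegral.integral_const, sub_zero, smul_eq_mul] at this
    linarith
  have b3 : (h τ - hk τ) ^ 2 ≤ 2 * K * k ^ 2 := by
    linarith [hE τ hτ, hQ0 τ]
  have b4 : (∫ s in (0:ℝ)..T, (h' s - hk' s) ^ 2) ≤ Ck * (K / κ + T * (6 * K + 1)) * k ^ 2 := by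
    have := time_integral_mono hT.le (f := fun s => (h' s - hk' s) ^ 2)
      (g := fun s => Ck * ((∫ x in (0:ℝ)..1, plD n y (c s) x ^ 2) + (6 * K + 1) * k ^ 2))
      (continuousOn_const.mul (hDc.add continuousOn_const)) (fun s => sq_nonneg _)
      (fun s hs => by
        refine (hkin s hs).trans (mul_le_mul_of_nonneg_left ?_ hCk)
        have h1 := trace_one hM (c s) one_pos
        have h2 := hE s hs
        have h3 := sq_nonneg (h s - hk s)
        have h4 := hQ0 s
        norm_num at h1
        linarith)
    rw [intervalIntegral.integral_const_mul,
      intervalIntegral.integral_add hDi intervalIntegrable_const] at this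
    simp only [intervalIntegral.integral_const, sub_zero, smul_eq_mul] at this
    refine this.trans ?_
    have h1 := mul_le_mul_of_nonneg_left hD' hCk
    linarith
  linarith

end

/-- **a priori error estimate.**
Fix constants `A₀ > 0`, `Bi > 0`, `H > 0`, `m₀ > 0`, `h₀ > 0`, `L ≥ h₀`, `M₁ > 0`, `M₂ ≥ 0`,
`b* > 0`, a final time `T̂ > 0`, a boundary datum `b` with `0 < b ≤ b*`, a Lipschitz (constant
`𝓛`) and bounded function `σ`, and a constant `ĉ₁ > 0`.  Let `(u, h)` (with time derivative
`ut` of `u`, spatial derivatives `uy`, `uyy` on `[0,1]`, and derivative `h′` of `h`) be a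
classical solution of the transformed moving boundary system, with `u(0,·) = u₀ ∈ H²(0,1)`
(automatic from the classical regularity; the `H²`-in-space integrability in time is the
hypothesis `hH2`), `h(0) = h₀`, and uniform bounds `h₀ ≤ h ≤ L`, `|h′| ≤ M₂`, `0 < u < M₁`.
Then there is a constant `c > 0`, independent of the partition and of the mesh size `k`, such
that for every partition `0 = y 0 < ⋯ < y (N-1) = 1` of mesh size `≤ k` and every solution
`(u_k, h_k)` of the semi-discrete Galerkin problem (piecewise linear in space, `C¹` in time,
satisfying the Galerkin relations for every test function `φ` in the finite element space
`V_k`, the kinetic law, `u_k(0,·) = I_k u₀`, `h_k(0) = h₀`, the same uniform bounds, and the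
`H¹`-bound `‖u_k(τ)‖²_{H¹} ≤ ĉ₁`), one has
`max_τ ‖u − u_k‖²_{L²} + ∫₀^{T̂} ‖∂_y(u − u_k)‖²_{L²} + max_τ |h − h_k|² + ∫₀^{T̂} |h′ − h_k′|² ≤ c k²`. -/
theorem stmt_15
    (A₀ Bi H m₀ h₀ L M₁ M₂ bstar 𝓛 Sσ T c₁ : ℝ)
    (hA₀ : 0 < A₀) (hBi : 0 < Bi) (hH : 0 < H) (hm₀ : 0 < m₀)
    (hh₀ : 0 < h₀) (hL : h₀ ≤ L) (hM₁ : 0 < M₁) (hM₂ : 0 ≤ M₂)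
    (hbs : 0 < bstar) (hT : 0 < T) (hc₁ : 0 < c₁)
    (b σ : ℝ → ℝ)
    (hb : ∀ τ ∈ Set.Icc (0:ℝ) T, 0 < b τ ∧ b τ ≤ bstar)
    (hσL : ∀ x y : ℝ, |σ x - σ y| ≤ 𝓛 * |x - y|)
    (hσB : ∀ x : ℝ, |σ x| ≤ Sσ)
    (u ut uy uyy : ℝ → ℝ → ℝ) (h h' : ℝ → ℝ)
    -- regularity of the exact solution: once continuously differentiable in τ,
    -- twice continuously differentiable in y
    (hu_t : ∀ x ∈ Set.Icc (0:ℝ) 1, ∀ τ ∈ Set.Icc (0:ℝ) T,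
        HasDerivAt (fun s => u s x) (ut τ x) τ)
    (hu_y : ∀ τ ∈ Set.Icc (0:ℝ) T, ∀ x ∈ Set.Icc (0:ℝ) 1,
        HasDerivWithinAt (u τ) (uy τ x) (Set.Icc 0 1) x)
    (hu_yy : ∀ τ ∈ Set.Icc (0:ℝ) T, ∀ x ∈ Set.Icc (0:ℝ) 1,
        HasDerivWithinAt (uy τ) (uyy τ x) (Set.Icc 0 1) x)
    (hu_c : ContinuousOn (fun q : ℝ × ℝ => u q.1 q.2) (Set.Icc 0 T ×ˢ Set.Icc 0 1))
    (hut_c : ContinuousOn (fun q : ℝ × ℝ => ut q.1 q.2) (Set.Icc 0 T ×ˢ Set.Icc 0 1))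
    (huy_c : ContinuousOn (fun q : ℝ × ℝ => uy q.1 q.2) (Set.Icc 0 T ×ˢ Set.Icc 0 1))
    (huyy_c : ContinuousOn (fun q : ℝ × ℝ => uyy q.1 q.2) (Set.Icc 0 T ×ˢ Set.Icc 0 1))
    (hh_d : ∀ τ ∈ Set.Icc (0:ℝ) T, HasDerivAt h (h' τ) τ)
    -- u₀ = u(0,·) ∈ H²(0,1) and u ∈ L²(0,T̂; H²(0,1))
    (hH2 : IntervalIntegrable
        (fun τ => ∫ x in (0:ℝ)..1, u τ x ^ 2 + uy τ x ^ 2 + uyy τ x ^ 2)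
        MeasureTheory.volume 0 T)
    -- the transformed moving boundary problem
    (hpde : ∀ τ ∈ Set.Ioo (0:ℝ) T, ∀ x ∈ Set.Icc (0:ℝ) 1,
        ut τ x - x * (h' τ / h τ) * uy τ x - 1 / h τ ^ 2 * uyy τ x = 0)
    (hbc0 : ∀ τ ∈ Set.Icc (0:ℝ) T,
        -(1 / h τ) * uy τ 0 = Bi * (b τ / m₀ - H * u τ 0))
    (hbc1 : ∀ τ ∈ Set.Icc (0:ℝ) T, -(1 / h τ) * uy τ 1 = h' τ * u τ 1)
    (hkin : ∀ τ ∈ Set.Icc (0:ℝ) T, h' τ = A₀ * (u τ 1 - σ (h τ) / m₀))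
    (hh0 : h 0 = h₀)
    -- uniform bounds for the exact solution
    (hhb : ∀ τ ∈ Set.Icc (0:ℝ) T, h₀ ≤ h τ ∧ h τ ≤ L)
    (hh'b : ∀ τ ∈ Set.Icc (0:ℝ) T, |h' τ| ≤ M₂)
    (hub : ∀ τ ∈ Set.Icc (0:ℝ) T, ∀ x ∈ Set.Icc (0:ℝ) 1, 0 < u τ x ∧ u τ x < M₁) :
    ∃ c : ℝ, 0 < c ∧
      ∀ (N : ℕ) (y : ℕ → ℝ) (k : ℝ) (uk ukt : ℝ → ℝ → ℝ) (hk hk' : ℝ → ℝ),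
        -- the partition, with maximal mesh width k
        2 ≤ N → y 0 = 0 → y (N - 1) = 1 →
        (∀ i, i < N - 1 → y i < y (i + 1)) →
        (∀ i, i < N - 1 → y (i + 1) - y i ≤ k) →
        -- u_k is piecewise linear in space (i.e. u_k(τ,·) ∈ V_k) and C¹ in time
        (∀ τ ∈ Set.Icc (0:ℝ) T, ∀ m, m < N - 1 → ∃ α β : ℝ,
            ∀ x ∈ Set.Icc (y m) (y (m + 1)), uk τ x = α * x + β) →
        (∀ x ∈ Set.Icc (0:ℝ) 1, ∀ τ ∈ Set.Icc (0:ℝ) T,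
            HasDerivAt (fun s => uk s x) (ukt τ x) τ) →
        (∀ τ ∈ Set.Icc (0:ℝ) T, HasDerivAt hk (hk' τ) τ) →
        -- the Galerkin relations, tested with every φ ∈ V_k
        (∀ τ ∈ Set.Ioo (0:ℝ) T, ∀ φ : ℝ → ℝ, Continuous φ →
          (∀ m, m < N - 1 → ∃ α β : ℝ,
              ∀ x ∈ Set.Icc (y m) (y (m + 1)), φ x = α * x + β) →
          (∫ x in (0:ℝ)..1, ukt τ x * φ x)
            - hk' τ / hk τ * (∫ x in (0:ℝ)..1, x * deriv (uk τ) x * φ x)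
            + 1 / hk τ ^ 2 * (∫ x in (0:ℝ)..1, deriv (uk τ) x * deriv φ x)
            - Bi / hk τ * (b τ / m₀ - H * uk τ 0) * φ 0
            + hk' τ / hk τ * uk τ 1 * φ 1 = 0) →
        -- the discrete kinetic law
        (∀ τ ∈ Set.Icc (0:ℝ) T, hk' τ = A₀ * (uk τ 1 - σ (hk τ) / m₀)) →
        -- initial conditions: u_k(0,·) is the Lagrange interpolant of u₀ = u(0,·)
        (∀ j, j < N → uk 0 (y j) = u 0 (y j)) →
        hk 0 = h₀ →
        -- uniform bounds for the discrete solution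
        (∀ τ ∈ Set.Icc (0:ℝ) T, h₀ ≤ hk τ ∧ hk τ ≤ L) →
        (∀ τ ∈ Set.Icc (0:ℝ) T, |hk' τ| ≤ M₂) →
        (∀ τ ∈ Set.Icc (0:ℝ) T, ∀ x ∈ Set.Icc (0:ℝ) 1, 0 < uk τ x ∧ uk τ x < M₁) →
        -- uniform H¹ bound, with ĉ₁ independent of k
        (∀ τ ∈ Set.Icc (0:ℝ) T,
            (∫ x in (0:ℝ)..1, uk τ x ^ 2 + deriv (uk τ) x ^ 2) ≤ c₁) →
        -- the a priori error estimate
        ∀ τ ∈ Set.Icc (0:ℝ) T,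
          (∫ x in (0:ℝ)..1, (u τ x - uk τ x) ^ 2)
            + (∫ s in (0:ℝ)..T, ∫ x in (0:ℝ)..1, (uy s x - deriv (uk s) x) ^ 2)
            + (h τ - hk τ) ^ 2
            + (∫ s in (0:ℝ)..T, (h' s - hk' s) ^ 2) ≤ c * k ^ 2 := by
  classical
  obtain ⟨P, hP0, hP⟩ := exists_bound hT.le huy_c
  obtain ⟨B, hB0, hB⟩ := exists_bound hT.le huyy_c
  obtain ⟨G, hG0, hG⟩ := exists_bound hT.le hut_c
  have hbm0 : 0 ≤ bstar / m₀ := by positivity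
  obtain ⟨κ, C, hκ, hC, hstep⟩ := energy_step hBi.le hH.le hh₀ hL hM₁.le hM₂ hbm0 hP0 hB0 hG0
    hA₀ hm₀ hσL
  obtain ⟨Ck, hCk, hkin_le⟩ := kinetic_ineq (R := 3 * B) hA₀ hm₀ hσL
  set K := (B ^ 2 + 1) * Real.exp (2 * C * T) with hK
  have hK0 : 0 < K := by positivity
  set c := (2 * (3 * B) ^ 2 + 4 * K) + (2 * (3 * B) ^ 2 * T + 2 * (K / κ)) + 2 * K
        + Ck * (K / κ + T * (6 * K + 1)) with hc
  have hc0 : 0 < c := by positivity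
  refine ⟨c, hc0, ?_⟩
  intro N y k uk ukt hk hk' hN hy0 hy1 hlt hle haff hukt hhk hgal hkink hinit hhk0 hhkb hhk'b
    hukb _ τ hτ
  obtain ⟨n, hn⟩ : ∃ n, N - 1 = n := ⟨_, rfl⟩
  have hnN : ∀ i, i ≤ n → i < N := fun i hi => by omega
  rw [hn] at hy1 hlt hle haff
  simp only [hn] at hgal
  have hMk : Mesh n y k := ⟨hy0, hy1, hlt, hle⟩
  -- the mesh width never exceeds `1`, so `k` may be replaced by `min k 1`
  obtain ⟨q, hqk, hq1, hM⟩ : ∃ q, q ≤ k ∧ q ≤ 1 ∧ Mesh n y q :=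
    ⟨min k 1, min_le_left _ _, min_le_right _ _, hy0, hy1, hlt, fun i hi => le_min (hle i hi) (by
      linarith [(hMk.mem hi.le).1, (hMk.mem (show i + 1 ≤ n from hi)).2])⟩
  have hq0 := hM.k_pos
  refine le_trans ?_ (mul_le_mul_of_nonneg_left (pow_le_pow_left₀ hq0.le hqk 2) hc0.le)
  obtain ⟨M, hM1, hMq, hMq'⟩ := exists_scale hq0 hq1
  have hpl : ∀ t ∈ Set.Icc (0:ℝ) T, ∀ x ∈ Set.Icc (0:ℝ) 1,
      uk t x = pl n y (fun i => uk t (y i)) x := fun t ht x hx => eq_pl_of_affine hM (haff t ht) hx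
  have hu_bd : ∀ t ∈ Set.Icc (0:ℝ) T, ∀ x ∈ Set.Icc (0:ℝ) 1, |u t x| ≤ M₁ := fun t ht x hx =>
    abs_le.2 ⟨by linarith [(hub t ht x hx).1], (hub t ht x hx).2.le⟩
  have hQ := fun t ht => quasi_bounds hM hMq hq1 (hu_y t ht) (hu_yy t ht) (hB t ht)
  have htime := fun i (hi : i ≤ n) => quasi_time hM M (fun t ht => slice_bm hu_c ht)
    (fun t ht => slice_bm hut_c ht) hu_t hu_bd hG hi
  set θ : ℝ → ℕ → ℝ := fun t i => quasi n y M (u t) i - uk t (y i) with hθ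
  have hθc : ∀ i, i ≤ n → ContinuousOn (fun t => θ t i) (Set.Icc 0 T) := fun i hi =>
    (htime i hi).1.sub fun t ht => (hukt _ (hM.mem hi) t ht).continuousAt.continuousWithinAt
  have hθd : ∀ t ∈ Set.Ioo (0:ℝ) T, ∀ i, i ≤ n → HasDerivAt (fun t => θ t i)
      (quasi n y M (ut t) i - ukt t (y i)) t := fun t ht i hi =>
    ((htime i hi).2 t ht).sub (hukt _ (hM.mem hi) t (Set.Ioo_subset_Icc_self ht))
  have hδc : ContinuousOn (fun t => h t - hk t) (Set.Icc 0 T) := fun t ht =>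
    ((hh_d t ht).sub (hhk t ht)).continuousAt.continuousWithinAt
  have hρ : ∀ t ∈ Set.Icc (0:ℝ) T, ∀ x ∈ Set.Icc (0:ℝ) 1,
      |u t x - uk t x - pl n y (θ t) x| ≤ 3 * B * q := by
    intro t ht x hx
    have : u t x - uk t x - pl n y (θ t) x = u t x - pl n y (quasi n y M (u t)) x := by
      rw [hθ, pl_sub, hpl t ht x hx]; ring
    rw [this]
    exact (hQ t ht).1 x hx
  have hρ' : ∀ t ∈ Set.Icc (0:ℝ) T, ∀ x ∈ Set.Icc (0:ℝ) 1, x ∉ Set.range y →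
      |uy t x - deriv (uk t) x - plD n y (θ t) x| ≤ 3 * B * q := by
    intro t ht x hx hxy
    have : uy t x - deriv (uk t) x - plD n y (θ t) x = uy t x - plD n y (quasi n y M (u t)) x := by
      rw [hθ, plD_sub, (hasDerivAt_of_eq_pl hM _ (hpl t ht) hx hxy).deriv]; ring
    rw [this]
    exact (hQ t ht).2.1 x hx hxy
  have m1 : (1:ℝ) ∈ Set.Icc (0:ℝ) 1 := ⟨zero_le_one, le_rfl⟩
  have hDc := sqD_continuousOn n y hθc
  -- the initial error: `h` and `h_k` start at the same point, and `Q u₀ - I u₀ = S (u₀ - I u₀)`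
  have hE0 : 1 / 2 * (∫ x in (0:ℝ)..1, pl n y (θ 0) x ^ 2) + 1 / 2 * (h 0 - hk 0) ^ 2
      ≤ B ^ 2 * q ^ 2 := by
    have h0T : (0:ℝ) ∈ Set.Icc (0:ℝ) T := ⟨le_rfl, hT.le⟩
    have hθ0 : ∀ i, i ≤ n → |θ 0 i| ≤ B * q := by
      intro i hi
      have : θ 0 i = smooth n y M (interpErr n y (u 0)) i := by
        rw [hθ]
        simp only [quasi, hinit i (hnN i hi)]
        ring
      rw [this]
      exact (hQ 0 h0T).2.2 i hi
    have := integral_le_off (y := y) (pl_bm n y (θ 0)).sq (BM.const ((B * q) ^ 2))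
      fun x hx _ => by
        rw [← sq_abs]
        gcongr
        exact pl_abs_le hM hθ0 hx
    simp only [intervalIntegral.integral_const, sub_zero, one_smul] at this
    rw [hh0, hhk0]
    nlinarith [sq_nonneg (B * q)]
  obtain ⟨hgE, hgD⟩ := gronwall_dissip (T := T) (κ := κ) (C := 2 * C) (q := q ^ 2) hT.le hκ.le
    (by positivity) (by positivity)
    (E := fun t => 1 / 2 * (∫ x in (0:ℝ)..1, pl n y (θ t) x ^ 2) + 1 / 2 * (h t - hk t) ^ 2)
    (E' := fun t => (∫ x in (0:ℝ)..1, pl n y (fun i => quasi n y M (ut t) i - ukt t (y i)) x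
      * pl n y (θ t) x) + (h t - hk t) * (h' t - hk' t))
    (D := fun t => ∫ x in (0:ℝ)..1, plD n y (θ t) x ^ 2)
    ((continuousOn_const.mul (sq_continuousOn n y hθc)).add
      (continuousOn_const.mul (hδc.pow 2))) hDc
    (fun t _ => add_nonneg (mul_nonneg (by norm_num)
      (intervalIntegral.integral_nonneg zero_le_one fun x _ => sq_nonneg _)) (by positivity))
    (fun t _ => intervalIntegral.integral_nonneg zero_le_one fun x _ => sq_nonneg _)
    (fun t ht => by
      have ht' := Set.Ioo_subset_Icc_self ht
      have d1 := (sq_hasDerivAt n y (hθd t ht)).const_mul (1 / 2)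
      have d2 := (((hh_d t ht').sub (hhk t ht')).pow 2).const_mul (1 / 2)
      refine (d1.add d2).congr_deriv ?_
      simp only [Pi.sub_apply]
      push_cast
      ring)
    (fun t ht => by
      have ht' := Set.Ioo_subset_Icc_self ht
      have hβ : |b t / m₀| ≤ bstar / m₀ := by
        rw [abs_of_pos (div_pos (hb t ht').1 hm₀)]
        exact div_le_div_of_nonneg_right (hb t ht').2 hm₀.le
      have hs := hstep n y q M (fun i => uk t (y i)) (fun i => ukt t (y i)) (u t) (uy t) (uyy t)
        (ut t) (h t) (h' t) (hk t) (hk' t) (b t / m₀) hM hq1 hM1 hMq hMq' (hu_y t ht')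
        (hu_yy t ht') (slice_bm huyy_c ht') (slice_bm hut_c ht') (hu_bd t ht') (hP t ht')
        (hB t ht') (hG t ht') (hpde t ht) (hbc0 t ht') (hbc1 t ht') (hhb t ht').1 (hhkb t ht').1
        (hhkb t ht').2 (hh'b t ht') (hhk'b t ht') hβ (hkin t ht')
        (by rw [← hpl t ht' 1 m1]; exact hkink t ht')
        (galerkin_nodal hM (hpl t ht')
          (fun x hx => time_deriv_nodal hM hpl hukt ht hx)
          (hgal t ht _ (pl_continuous n y _) (pl_affine hM _)))
      have hq2 : 0 ≤ C * q ^ 2 := by positivity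
      refine hs.trans ?_
      linarith only [hq2])
  have hK' : (1 / 2 * (∫ x in (0:ℝ)..1, pl n y (θ 0) x ^ 2) + 1 / 2 * (h 0 - hk 0) ^ 2 + q ^ 2)
      * Real.exp (2 * C * T) ≤ K * q ^ 2 := by
    rw [hK]
    have := mul_le_mul_of_nonneg_right hE0 (Real.exp_pos (2 * C * T)).le
    linarith
  exact final_bounds hM hT hκ hCk hρ hρ'
    (fun t ht => hkin_le _ _ _ _ _ _ _ _ (hkin t ht) (hkink t ht) (hρ t ht 1 m1)) hDc
    (fun t ht => (hgE t ht).trans hK') (hgD.trans hK') hτ
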